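/- arXiv:1809.09579 — 2 statements merged into one kernel-verified Lean document; each statement's English description precedes it below -/
import Mathlib

section
/- There is a constant A > 0 such that for every ε ∈ (0,1) and C_U > 0 there exist κ > 0 and x₀ with the following property: for all x ≥ x₀, all integers M ≤ κ·x^{1/5}, and all real K ≥ 2, ∑_{U/(zK) ≤ m < U/z} |R_m^{(M)}| ≤ A·U·M·log K/((log x)·(log y)·φ(M)), where the sum is over integers m in the stated range. -/
open scoped Classical

/-- `y = exp((1−ε)·log x·log₃x/log₂x)`. -/
noncomputable def yy (ε x : ℝ) : ℝ :=
  Real.exp ((1 - ε) * Real.log x * Real.log^[3] x / Real.log^[2] x)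

/-- `z = x/log₂ x`. -/
noncomputable def zz (x : ℝ) : ℝ := x / Real.log^[2] x

/-- `U = C_U·(φ(M)/M)·x·log y/log₂ x`. -/
noncomputable def UU (CU : ℝ) (M : ℕ) (ε x : ℝ) : ℝ :=
  CU * ((M.totient : ℝ) / (M : ℝ)) * x * Real.log (yy ε x) / Real.log^[2] x

/-- `P_M(t) = ∏_{p ≤ t, p ∤ M} p`. -/
noncomputable def PM (M : ℕ) (t : ℝ) : ℕ :=
  ∏ p ∈ (Finset.range (⌊t⌋₊ + 1)).filter (fun p : ℕ => p.Prime ∧ ¬ p ∣ M), p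

/-- `R_m^{(M)} = {p prime : z < p ≤ U/m, gcd(mp − 1, P_M(y)) = 1}`. -/
noncomputable def RmM (CU ε x : ℝ) (M m : ℕ) : Finset ℕ :=
  (Finset.range (⌊UU CU M ε x / (m : ℝ)⌋₊ + 1)).filter (fun p : ℕ =>
    p.Prime ∧ zz x < (p : ℝ) ∧ Nat.gcd (m * p - 1) (PM M (yy ε x)) = 1)

open Finset in
theorem sb_moebius (k l : ℕ) (hl : Squarefree l) (P : ℕ) (hP : P ≠ 0) (hlP : l ∣ P) :
    ∑ d ∈ P.divisors, (if k ∣ d ∧ d ∣ l then (ArithmeticFunction.moebius d : ℝ) else 0)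
      = if k = l then (ArithmeticFunction.moebius l : ℝ) else 0 := by
  by_cases hkl : k ∣ l
  · obtain ⟨e, rfl⟩ := hkl
    have hke : Nat.Coprime k e := Nat.coprime_of_squarefree_mul hl
    have hk0 : k ≠ 0 := by rintro rfl; simp at hl
    have he0 : e ≠ 0 := by rintro rfl; simp at hl
    have : ∑ d ∈ P.divisors, (if k ∣ d ∧ d ∣ k * e then (ArithmeticFunction.moebius d : ℝ) else 0)
        = ∑ d ∈ e.divisors, (ArithmeticFunction.moebius (k * d) : ℝ) := by
      rw [← Finset.sum_filter]
      symm
      refine Finset.sum_bij (fun d _ => k * d) ?_ ?_ ?_ ?_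
      · intro d hd
        simp only [Nat.mem_divisors, Finset.mem_filter] at hd ⊢
        exact ⟨⟨(mul_dvd_mul_left k hd.1).trans hlP, hP⟩, dvd_mul_right _ _, mul_dvd_mul_left k hd.1⟩
      · intro a _ b _ h
        exact Nat.eq_of_mul_eq_mul_left (Nat.pos_of_ne_zero hk0) h
      · intro d hd
        simp only [Nat.mem_divisors, Finset.mem_filter] at hd
        obtain ⟨_, ⟨f, rfl⟩, h2⟩ := hd
        exact ⟨f, Nat.mem_divisors.2 ⟨Nat.dvd_of_mul_dvd_mul_left (Nat.pos_of_ne_zero hk0) h2, he0⟩, rfl⟩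
      · intros; rfl
    rw [this]
    have h2 : ∀ d ∈ e.divisors, (ArithmeticFunction.moebius (k * d) : ℝ)
        = ArithmeticFunction.moebius k * ArithmeticFunction.moebius d := by
      intro d hd
      have := Nat.Coprime.coprime_dvd_right (Nat.dvd_of_mem_divisors hd) hke
      rw [ArithmeticFunction.isMultiplicative_moebius.map_mul_of_coprime this]
      push_cast; rfl
    rw [Finset.sum_congr rfl h2, ← Finset.mul_sum]
    have h3 : ∑ d ∈ e.divisors, (ArithmeticFunction.moebius d : ℝ) = if e = 1 then 1 else 0 := by
      have h := ArithmeticFunction.coe_mul_zeta_apply (f := ArithmeticFunction.moebius) (x := e)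
      rw [ArithmeticFunction.moebius_mul_coe_zeta, ArithmeticFunction.one_apply] at h
      have h' := congrArg (fun t : ℤ => (t : ℝ)) h
      push_cast at h'
      exact h'.symm
    rw [h3]
    by_cases he : e = 1
    · simp [he]
    · have : k ≠ k * e := by
        intro h
        have : k * 1 = k * e := by simpa using h
        exact he (Nat.eq_of_mul_eq_mul_left (Nat.pos_of_ne_zero hk0) this).symm
      rw [if_neg he, if_neg this, mul_zero]
  · rw [if_neg (by rintro rfl; exact hkl dvd_rfl)]
    apply Finset.sum_eq_zero
    intro d _
    rw [if_neg]
    rintro ⟨h1, h2⟩; exact hkl (h1.trans h2)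

open Finset in
theorem sb_selberg (s : BoundingSieve) (R : ℕ) (hR : 1 ≤ R)
    (hrem : ∀ d, d ∣ s.prodPrimes → |s.rem d| ≤ d)
    (hnu : ∀ d, d ∣ s.prodPrimes → 1 / (d : ℝ) ≤ s.nu d) :
    s.siftedSum ≤ s.totalMass / (∑ l ∈ s.prodPrimes.divisors with l ≤ R, s.selbergTerms l)
      + (R : ℝ) ^ 8 := by
  set P := s.prodPrimes with hPdef
  have hP0 : P ≠ 0 := BoundingSieve.prodPrimes_ne_zero
  set g := s.selbergTerms with hg
  set L := P.divisors.filter (fun l => l ≤ R) with hL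
  set S := ∑ l ∈ L, g l with hS
  have gpos : ∀ l ∈ L, 0 < g l := by
    intro l hl
    simp only [hL, mem_filter, Nat.mem_divisors] at hl
    exact BoundingSieve.selbergTerms_pos hl.1.1
  have h1L : 1 ∈ L := by simp [hL, hP0, hR]
  have Spos : 0 < S := sum_pos gpos ⟨1, h1L⟩
  let w : ℕ → ℝ := fun d => if d ∣ P then
    (ArithmeticFunction.moebius d : ℝ) / (S * s.nu d) * ∑ l ∈ L, (if d ∣ l then g l else 0) else 0
  have hnu1 : s.nu 1 = 1 := s.nu_mult.map_one
  have w1 : w 1 = 1 := by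
    simp only [w, one_dvd, if_true, hnu1]
    simp only [ArithmeticFunction.moebius_apply_one, Int.cast_one, mul_one]
    rw [← hS]; field_simp
  have sumle : ∀ d, |∑ l ∈ L, (if d ∣ l then g l else 0)| ≤ S := by
    intro d
    rw [abs_of_nonneg]
    · apply sum_le_sum
      intro l hl
      split_ifs
      · exact le_rfl
      · exact (gpos l hl).le
    · apply sum_nonneg
      intro l hl
      split_ifs
      · exact (gpos l hl).le
      · exact le_rfl
  have wle : ∀ d, |w d| ≤ R := by
    intro d
    by_cases hd : d ∣ P
    · by_cases hdR : d ≤ R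
      · have nupos : 0 < s.nu d := BoundingSieve.nu_pos_of_dvd_prodPrimes hd
        have hd0 : 0 < d := Nat.pos_of_ne_zero (ne_zero_of_dvd_ne_zero hP0 hd)
        have hd0' : (0:ℝ) < d := by exact_mod_cast hd0
        simp only [w, if_pos hd]
        rw [abs_mul, abs_div, abs_of_pos (mul_pos Spos nupos)]
        have hmu : |(ArithmeticFunction.moebius d : ℝ)| ≤ 1 := by
          exact_mod_cast (ArithmeticFunction.abs_moebius_le_one (n := d))
        calc _ ≤ 1 / (S * s.nu d) * S := by
              gcongr
              exact sumle d
          _ = 1 / s.nu d := by field_simp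
          _ ≤ d := by
              rw [div_le_iff₀ nupos]
              have := hnu d hd
              rw [div_le_iff₀ hd0'] at this
              linarith
          _ ≤ R := by exact_mod_cast hdR
      · have : ∑ l ∈ L, (if d ∣ l then g l else 0) = 0 := by
          apply sum_eq_zero
          intro l hl
          rw [if_neg]
          intro h
          simp only [hL, mem_filter, Nat.mem_divisors] at hl
          have := Nat.le_of_dvd (Nat.pos_of_ne_zero (ne_zero_of_dvd_ne_zero hP0 hl.1.1)) h
          omega
        simp [w, this]
    · simp [w, hd]
  have wzero : ∀ d, R < d → w d = 0 := by
    intro d hdR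
    have : ∑ l ∈ L, (if d ∣ l then g l else 0) = 0 := by
      apply sum_eq_zero
      intro l hl
      rw [if_neg]
      intro h
      simp only [hL, mem_filter, Nat.mem_divisors] at hl
      have := Nat.le_of_dvd (Nat.pos_of_ne_zero (ne_zero_of_dvd_ne_zero hP0 hl.1.1)) h
      omega
    simp [w, this]
  have key : ∀ k ∈ P.divisors, (∑ d ∈ P.divisors, if k ∣ d then s.nu d * w d else 0)
      = if k ≤ R then (ArithmeticFunction.moebius k : ℝ) * g k / S else 0 := by
    intro k hk
    have hkP := (Nat.mem_divisors.1 hk).1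
    have e1 : ∀ d ∈ P.divisors, (if k ∣ d then s.nu d * w d else 0)
        = ∑ l ∈ L, g l / S * (if k ∣ d ∧ d ∣ l then (ArithmeticFunction.moebius d : ℝ) else 0) := by
      intro d hd
      have hdP := (Nat.mem_divisors.1 hd).1
      have nupos : 0 < s.nu d := BoundingSieve.nu_pos_of_dvd_prodPrimes hdP
      by_cases hkd : k ∣ d
      · simp only [w, hkd, hdP, if_true, true_and]
        rw [mul_sum, mul_sum]
        apply sum_congr rfl
        intro l _
        split_ifs
        · field_simp
        · simp
      · simp [hkd]
    rw [sum_congr rfl e1, sum_comm]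
    have e2 : ∀ l ∈ L, ∑ d ∈ P.divisors, g l / S *
        (if k ∣ d ∧ d ∣ l then (ArithmeticFunction.moebius d : ℝ) else 0)
        = if k = l then (ArithmeticFunction.moebius k : ℝ) * g k / S else 0 := by
      intro l hl
      simp only [hL, mem_filter, Nat.mem_divisors] at hl
      rw [← mul_sum, sb_moebius k l (BoundingSieve.squarefree_of_dvd_prodPrimes hl.1.1) P hP0 hl.1.1]
      split_ifs with h
      · subst h; ring
      · simp
    rw [sum_congr rfl e2, sum_ite_eq]
    have : k ∈ L ↔ k ≤ R := by simp [hL, hkP, hP0]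
    simp only [this]
  have main : s.mainSum (BoundingSieve.lambdaSquared w) = 1 / S := by
    rw [BoundingSieve.mainSum_lambdaSquared_eq_sum_mul_sum_sq]
    have e3 : ∀ l ∈ P.divisors, (g l)⁻¹ * (∑ d ∈ P.divisors, if l ∣ d then s.nu d * w d else 0) ^ 2
        = if l ≤ R then g l / S ^ 2 else 0 := by
      intro l hl
      rw [key l hl]
      have hlP := (Nat.mem_divisors.1 hl).1
      split_ifs
      · have hpos : 0 < g l := BoundingSieve.selbergTerms_pos hlP
        have hm : ((ArithmeticFunction.moebius l : ℤ) : ℝ) ^ 2 = 1 := by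
          exact_mod_cast ArithmeticFunction.moebius_sq_eq_one_of_squarefree
            (BoundingSieve.squarefree_of_dvd_prodPrimes hlP)
        rw [div_pow, mul_pow, hm]
        field_simp
      · simp
    rw [sum_congr rfl e3, ← sum_filter, ← hL, ← sum_div, ← hS]
    field_simp
  have hR1 : (1:ℝ) ≤ R := by exact_mod_cast hR
  have lamle : ∀ d, |BoundingSieve.lambdaSquared w d| ≤ (R:ℝ) ^ 4 := by
    intro d
    have : BoundingSieve.lambdaSquared w d = ∑ d1 ∈ d.divisors.filter (fun l => l ≤ R),
        ∑ d2 ∈ d.divisors.filter (fun l => l ≤ R),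
        if d = Nat.lcm d1 d2 then w d1 * w d2 else 0 := by
      unfold BoundingSieve.lambdaSquared
      symm
      apply sum_subset_zero_on_sdiff (filter_subset _ _)
      · intro a ha
        simp only [mem_sdiff, mem_filter, not_and, not_le] at ha
        apply sum_eq_zero
        intro b _
        simp [wzero a (ha.2 ha.1)]
      · intro a _
        apply sum_subset_zero_on_sdiff (filter_subset _ _)
        · intro b hb
          simp only [mem_sdiff, mem_filter, not_and, not_le] at hb
          simp [wzero b (hb.2 hb.1)]
        · intros; rfl
    rw [this]
    have hcard : ((d.divisors.filter (fun l => l ≤ R)).card : ℝ) ≤ R := by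
      have : d.divisors.filter (fun l => l ≤ R) ⊆ Icc 1 R := by
        intro a ha
        simp only [mem_filter, mem_Icc] at ha ⊢
        exact ⟨Nat.pos_of_mem_divisors ha.1, ha.2⟩
      have := card_le_card this
      simp only [Nat.card_Icc, Nat.add_sub_cancel] at this
      exact_mod_cast this
    have inner : ∀ d1 ∈ d.divisors.filter (fun l => l ≤ R),
        |∑ d2 ∈ d.divisors.filter (fun l => l ≤ R),
        if d = Nat.lcm d1 d2 then w d1 * w d2 else 0| ≤ (R:ℝ)^3 := by
      intro d1 _
      refine (abs_sum_le_sum_abs _ _).trans ?_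
      refine (sum_le_card_nsmul _ _ ((R:ℝ)^2) ?_).trans ?_
      · intro d2 _
        split_ifs
        · rw [abs_mul, sq]
          exact mul_le_mul (wle _) (wle _) (abs_nonneg _) (by positivity)
        · simp
      · rw [nsmul_eq_mul]
        calc _ ≤ (R:ℝ) * (R:ℝ)^2 := by gcongr
          _ = _ := by ring
    refine (abs_sum_le_sum_abs _ _).trans ?_
    refine (sum_le_card_nsmul _ _ ((R:ℝ)^3) inner).trans ?_
    rw [nsmul_eq_mul]
    calc _ ≤ (R:ℝ) * (R:ℝ)^3 := by gcongr
      _ = _ := by ring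
  have lamzero : ∀ d, R ^ 2 < d → BoundingSieve.lambdaSquared w d = 0 := by
    intro d hd
    unfold BoundingSieve.lambdaSquared
    apply sum_eq_zero
    intro a ha
    apply sum_eq_zero
    intro b hb
    split_ifs with h
    · by_cases haR : R < a
      · simp [wzero a haR]
      by_cases hbR : R < b
      · simp [wzero b hbR]
      exfalso
      have : Nat.lcm a b ≤ a * b := Nat.le_of_dvd
        (Nat.mul_pos (Nat.pos_of_mem_divisors ha) (Nat.pos_of_mem_divisors hb)) (Nat.lcm_dvd_mul a b)
      have h2 : a * b ≤ R * R := Nat.mul_le_mul (by omega) (by omega)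
      rw [← h] at this
      nlinarith
    · rfl
  have err : s.errSum (BoundingSieve.lambdaSquared w) ≤ (R:ℝ)^8 := by
    unfold BoundingSieve.errSum
    rw [← hPdef]
    calc ∑ d ∈ P.divisors, |BoundingSieve.lambdaSquared w d| * |s.rem d|
        ≤ ∑ d ∈ P.divisors, (if d ≤ R^2 then (R:ℝ)^6 else 0) := by
          apply sum_le_sum
          intro d hd
          split_ifs with h
          · have h1 := lamle d
            have h2 := hrem d (Nat.mem_divisors.1 hd).1
            have h3 : (d:ℝ) ≤ (R:ℝ)^2 := by exact_mod_cast h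
            calc _ ≤ (R:ℝ)^4 * (R:ℝ)^2 := by
                  apply mul_le_mul h1 (h2.trans h3) (abs_nonneg _) (by positivity)
              _ = _ := by ring
          · rw [lamzero d (by omega)]; simp
      _ = ((P.divisors.filter (fun d => d ≤ R^2)).card : ℝ) * (R:ℝ)^6 := by
          rw [← sum_filter, sum_const, nsmul_eq_mul]
      _ ≤ (R:ℝ)^2 * (R:ℝ)^6 := by
          have : P.divisors.filter (fun l => l ≤ R^2) ⊆ Icc 1 (R^2) := by
            intro a ha
            simp only [mem_filter, mem_Icc] at ha ⊢
            exact ⟨Nat.pos_of_mem_divisors ha.1, ha.2⟩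
          have := card_le_card this
          simp only [Nat.card_Icc, Nat.add_sub_cancel] at this
          gcongr
          exact_mod_cast this
      _ = _ := by ring
  have := BoundingSieve.siftedSum_le_mainSum_errSum_of_upperMoebius (s := s) _
    (BoundingSieve.upperMoebius_lambdaSquared w w1)
  rw [main] at this
  calc _ ≤ _ := this
    _ ≤ _ := by rw [mul_one_div]; gcongr
open Finset in
theorem sb_crt (a b : ℕ) (ha : 0 < a) (hb : 0 < b) (hab : Nat.Coprime a b) (p q : ℕ → Prop)
    (hp : ∀ n, p n ↔ p (n % a)) (hq : ∀ n, q n ↔ q (n % b)) :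
    ((range (a * b)).filter (fun n => p n ∧ q n)).card
      = ((range a).filter p).card * ((range b).filter q).card := by
  rw [← card_product]
  refine card_bij (fun n _ => (n % a, n % b)) ?_ ?_ ?_
  · intro n hn
    simp only [mem_filter, mem_product, mem_range] at hn ⊢
    exact ⟨⟨Nat.mod_lt _ ha, (hp n).1 hn.2.1⟩, Nat.mod_lt _ hb, (hq n).1 hn.2.2⟩
  · intro n hn k hk h
    simp only [mem_filter, mem_range, Prod.mk.injEq] at hn hk h
    have := (Nat.modEq_and_modEq_iff_modEq_mul hab).1 ⟨h.1, h.2⟩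
    exact Nat.ModEq.eq_of_lt_of_lt this hn.1 hk.1
  · rintro ⟨u, v⟩ huv
    simp only [mem_filter, mem_product, mem_range] at huv
    obtain ⟨⟨hu, hpu⟩, hv, hqv⟩ := huv
    let k := Nat.chineseRemainder hab u v
    have hk := Nat.chineseRemainder_lt_mul hab u v ha.ne' hb.ne'
    have k1 : (k : ℕ) % a = u := by
      have := k.2.1
      unfold Nat.ModEq at this
      rw [this, Nat.mod_eq_of_lt hu]
    have k2 : (k : ℕ) % b = v := by
      have := k.2.2
      unfold Nat.ModEq at this
      rw [this, Nat.mod_eq_of_lt hv]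
    refine ⟨k, ?_, ?_⟩
    · simp only [mem_filter, mem_range]
      exact ⟨hk, (hp _).2 (by rw [k1]; exact hpu), (hq _).2 (by rw [k2]; exact hqv)⟩
    · simp [k1, k2]

open Finset in
theorem sb_omega (B : ℕ → ℕ → Prop) (hB : ∀ q n, B q n ↔ B q (n % q)) (s : Finset ℕ)
    (hs : ∀ q ∈ s, q.Prime) :
    ((range (∏ q ∈ s, q)).filter (fun n => ∀ q ∈ s, B q n)).card
      = ∏ q ∈ s, ((range q).filter (B q)).card := by
  induction s using Finset.induction_on with
  | empty => simp
  | insert r s hr ih =>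
    have hs' : ∀ q ∈ s, q.Prime := fun q hq => hs q (mem_insert_of_mem hq)
    have hrp := hs r (mem_insert_self _ _)
    have key := sb_crt r (∏ q ∈ s, q) hrp.pos
      (prod_pos fun q hq => (hs' q hq).pos) ?_ (B r) (fun n => ∀ q ∈ s, B q n) (hB r) ?_
    · rw [prod_insert hr, prod_insert hr, ← ih hs']
      convert key using 2
      · ext n
        simp
      · congr
    rotate_left
    · intro n
      refine forall₂_congr fun q hq => ?_
      rw [hB q n, hB q (n % ∏ q ∈ s, q), Nat.mod_mod_of_dvd _ (dvd_prod_of_mem (fun q => q) hq)]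
    · apply Nat.Coprime.prod_right
      intro q hq
      rw [Nat.coprime_primes hrp (hs' q hq)]
      rintro rfl; exact hr hq

open Finset in
theorem sb_count (p : ℕ → Prop) (d : ℕ) (hd : 0 < d) (hp : ∀ n, p n ↔ p (n % d)) (N : ℕ) :
    |(((Icc 1 N).filter p).card : ℝ) - ((range d).filter p).card / (d : ℝ) * N|
      ≤ ((range d).filter p).card := by
  set c := ((range d).filter p).card with hc
  have hper : Function.Periodic p d := by
    intro n
    rw [eq_iff_iff, hp, hp n, Nat.add_mod_right]
  have step : ∀ k, ((Ico 1 (1 + d * k)).filter p).card = c * k := by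
    intro k
    induction k with
    | zero => simp
    | succ k ih =>
      have h1 : (Ico 1 (1 + d * (k+1))) = Ico 1 (1 + d * k) ∪ Ico (1 + d * k) (1 + d * k + d) := by
        rw [Finset.Ico_union_Ico_eq_Ico (by omega) (by omega)]
        congr 1; ring
      rw [h1, filter_union, card_union_of_disjoint, ih, Nat.filter_Ico_card_eq_of_periodic _ _ _ hper,
        Nat.count_eq_card_filter_range, mul_add, mul_one]
      apply disjoint_filter_filter
      exact Ico_disjoint_Ico_consecutive _ _ _
  have lo : c * (N / d) ≤ ((Icc 1 N).filter p).card := by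
    rw [← step]
    apply card_le_card
    apply filter_subset_filter
    intro n hn
    simp only [mem_Ico, mem_Icc] at hn ⊢
    have := Nat.mul_div_le N d
    omega
  have hi : ((Icc 1 N).filter p).card ≤ c * (N / d + 1) := by
    rw [← step]
    apply card_le_card
    apply filter_subset_filter
    intro n hn
    simp only [mem_Ico, mem_Icc] at hn ⊢
    have := Nat.lt_mul_div_succ N hd
    omega
  have hd' : (0:ℝ) < d := by exact_mod_cast hd
  have f1 : ((N / d : ℕ) : ℝ) ≤ (N:ℝ) / d := Nat.cast_div_le
  have f2 : (N:ℝ) / d ≤ ((N / d : ℕ) : ℝ) + 1 := by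
    rw [div_le_iff₀ hd']
    have := Nat.lt_mul_div_succ N hd
    have h : (N:ℝ) < d * (((N / d : ℕ) : ℝ) + 1) := by exact_mod_cast this
    linarith
  have lo' : (c:ℝ) * ((N / d : ℕ) : ℝ) ≤ (((Icc 1 N).filter p).card : ℝ) := by exact_mod_cast lo
  have hi' : (((Icc 1 N).filter p).card : ℝ) ≤ c * (((N / d : ℕ) : ℝ) + 1) := by exact_mod_cast hi
  have c0 : (0:ℝ) ≤ c := Nat.cast_nonneg c
  have e : (c:ℝ) / d * N = c * ((N:ℝ)/d) := by ring
  rw [e, abs_le]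
  constructor <;> nlinarith

open Finset in
theorem sb_local (m P' q : ℕ) (hq : q.Prime) (hmP : Nat.Coprime m P') :
    ((range q).filter (fun n => q ∣ n ∨ (q ∣ P' ∧ m * n ≡ 1 [MOD q]))).card
      = if q ∣ P' then 2 else 1 := by
  split_ifs with h
  · have hmq : Nat.Coprime m q := Nat.Coprime.coprime_dvd_right h hmP
    obtain ⟨u, hu⟩ := Nat.exists_mul_mod_eq_one_of_coprime hmq hq.one_lt
    have hu1 : m * u ≡ 1 [MOD q] := by
      unfold Nat.ModEq; rw [hu.2, Nat.mod_eq_of_lt hq.one_lt]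
    have : (range q).filter (fun n => q ∣ n ∨ (q ∣ P' ∧ m * n ≡ 1 [MOD q])) = {0, u % q} := by
      ext n
      simp only [mem_filter, mem_range, mem_insert, mem_singleton, h, true_and]
      constructor
      · rintro ⟨hn, h1 | h1⟩
        · left; exact Nat.eq_zero_of_dvd_of_lt h1 hn
        · right
          have : m * n ≡ m * u [MOD q] := h1.trans hu1.symm
          have := Nat.ModEq.cancel_left_of_coprime (by rw [Nat.gcd_comm]; exact hmq) this
          unfold Nat.ModEq at this
          rw [← this, Nat.mod_eq_of_lt hn]
      · rintro (rfl | rfl)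
        · exact ⟨hq.pos, Or.inl (dvd_zero _)⟩
        · refine ⟨Nat.mod_lt _ hq.pos, Or.inr ?_⟩
          exact ((Nat.mod_modEq u q).mul_left m).trans hu1
    rw [this, card_pair]
    intro h0
    have hqu : q ∣ u := Nat.dvd_of_mod_eq_zero h0.symm
    have : m * u % q = 0 := Nat.mod_eq_zero_of_dvd (hqu.mul_left m)
    omega
  · have : (range q).filter (fun n => q ∣ n ∨ (q ∣ P' ∧ m * n ≡ 1 [MOD q])) = {0} := by
      ext n
      simp only [mem_filter, mem_range, mem_singleton, h, false_and, or_false]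
      constructor
      · rintro ⟨hn, h1⟩
        exact Nat.eq_zero_of_dvd_of_lt h1 hn
      · rintro rfl
        exact ⟨hq.pos, dvd_zero _⟩
    rw [this, card_singleton]

theorem sb_log_le (N : ℕ) : Real.log ((N : ℝ) + 1) ≤ ∑ n ∈ Finset.Icc 1 N, 1 / (n : ℝ) := by
  have := log_add_one_le_harmonic N
  rw [harmonic_eq_sum_Icc] at this
  push_cast at this
  simpa [one_div] using this

open Finset in
theorem sb_coprime_sum (N : ℕ) (s : Finset ℕ) (hs : ∀ q ∈ s, q.Prime) :
    (∏ q ∈ s, (1 - 1 / (q : ℝ))) * ∑ n ∈ Icc 1 N, 1 / (n : ℝ)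
      ≤ ∑ n ∈ (Icc 1 N).filter (fun n => ∀ q ∈ s, ¬ q ∣ n), 1 / (n : ℝ) := by
  induction s using Finset.induction_on with
  | empty => simp
  | insert r s hr ih =>
    have hs' : ∀ q ∈ s, q.Prime := fun q hq => hs q (mem_insert_of_mem hq)
    have hrp := hs r (mem_insert_self _ _)
    have hr0 : (0:ℝ) < r := by exact_mod_cast hrp.pos
    have hr1 : (1:ℝ) ≤ r := by exact_mod_cast hrp.one_lt.le
    have ih := ih hs'
    set A := (Icc 1 N).filter (fun n => ∀ q ∈ s, ¬ q ∣ n) with hA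
    have hsplit : ∑ n ∈ A, 1 / (n : ℝ) = ∑ n ∈ A with r ∣ n, 1 / (n : ℝ) + ∑ n ∈ A with ¬ r ∣ n, 1 / (n:ℝ) :=
      (sum_filter_add_sum_filter_not A _ _).symm
    have h1 : ∑ n ∈ A with r ∣ n, 1 / (n : ℝ) ≤ 1 / r * ∑ n ∈ A, 1 / (n : ℝ) := by
      have hsub : A.filter (fun n => r ∣ n) ⊆ A.image (fun n => r * n) := by
        intro n hn
        simp only [hA, mem_filter, mem_Icc, mem_image] at hn ⊢
        obtain ⟨⟨⟨h1, h2⟩, h3⟩, ⟨k, rfl⟩⟩ := hn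
        have hk : 1 ≤ k := by
          rcases Nat.eq_zero_or_pos k with rfl | h
          · simp at h1
          · exact h
        refine ⟨k, ⟨⟨hk, le_trans (Nat.le_mul_of_pos_left k hrp.pos) h2⟩, ?_⟩, rfl⟩
        intro q hq hqk
        exact h3 q hq (hqk.mul_left r)
      calc _ ≤ ∑ n ∈ A.image (fun n => r * n), 1 / (n : ℝ) :=
            sum_le_sum_of_subset_of_nonneg hsub (fun _ _ _ => by positivity)
        _ = ∑ n ∈ A, 1 / ((r * n : ℕ) : ℝ) := by
            apply sum_image
            intro a _ b _ h
            exact Nat.eq_of_mul_eq_mul_left hrp.pos h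
        _ = _ := by
            rw [mul_sum]
            apply sum_congr rfl
            intro n _
            push_cast
            rw [one_div_mul_one_div]
    have h2 : (Icc 1 N).filter (fun n => ∀ q ∈ insert r s, ¬ q ∣ n) = A.filter (fun n => ¬ r ∣ n) := by
      ext n
      simp only [hA, mem_filter, forall_mem_insert]
      tauto
    rw [h2, prod_insert hr, mul_assoc]
    have h3 : 0 ≤ 1 - 1 / (r:ℝ) := by
      rw [sub_nonneg, div_le_one hr0]; exact hr1
    have := mul_le_mul_of_nonneg_left ih h3
    linarith

open Finset in
theorem sb_totient (k : ℕ) : (k : ℝ) * ∏ q ∈ k.primeFactors, (1 - 1 / (q : ℝ)) = k.totient := by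
  have := Nat.totient_eq_mul_prod_factors k
  have h := congrArg (fun t : ℚ => (t : ℝ)) this
  push_cast at h
  simpa [one_div] using h.symm

open Finset in
theorem sb_tele (s : Finset ℕ) (hs : ∀ q ∈ s, 2 ≤ q) : (1:ℝ)/2 ≤ ∏ q ∈ s, (1 - 1 / (q:ℝ)^2) := by
  have hterm : ∀ q : ℕ, 2 ≤ q → (0:ℝ) ≤ 1 - 1/(q:ℝ)^2 ∧ 1 - 1/(q:ℝ)^2 ≤ 1 := by
    intro q hq
    have : (2:ℝ) ≤ q := by exact_mod_cast hq
    constructor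
    · rw [sub_nonneg, div_le_one (by positivity)]; nlinarith
    · have : (0:ℝ) ≤ 1/(q:ℝ)^2 := by positivity
      linarith
  have full : ∀ n : ℕ, ((n:ℝ) + 2) / (2 * (n + 1)) = ∏ q ∈ Icc 2 (n+1), (1 - 1 / (q:ℝ)^2) := by
    intro n
    induction n with
    | zero => simp
    | succ n ih =>
      rw [Finset.prod_Icc_succ_top (by omega), ← ih]
      push_cast
      field_simp
      ring
  set n := s.sup id with hn
  have hsub : s ⊆ Icc 2 (n+1) := by
    intro q hq
    rw [mem_Icc]
    refine ⟨hs q hq, ?_⟩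
    have : q ≤ n := Finset.le_sup (f := id) hq
    omega
  have fulln := full n
  rw [← prod_sdiff hsub] at fulln
  have h1 : ∏ q ∈ Icc 2 (n+1) \ s, (1 - 1 / (q:ℝ)^2) ≤ 1 := by
    apply prod_le_one
    · intro q hq
      exact (hterm q (mem_Icc.1 (mem_sdiff.1 hq).1).1).1
    · intro q hq
      exact (hterm q (mem_Icc.1 (mem_sdiff.1 hq).1).1).2
  have h2 : 0 ≤ ∏ q ∈ s, (1 - 1 / (q:ℝ)^2) := prod_nonneg fun q hq => (hterm q (hs q hq)).1
  have h3 : (1:ℝ)/2 ≤ ((n:ℝ) + 2) / (2 * (n + 1)) := by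
    rw [div_le_div_iff₀ (by norm_num) (by positivity)]
    linarith
  rw [fulln] at h3
  nlinarith

open Finset in
theorem sb_inv_totient (m : ℕ) (hm : 0 < m) :
    1 / (m.totient : ℝ) ≤ 2 / (m:ℝ) * ∑ d ∈ m.divisors, 1 / (d : ℝ) := by
  have h1 := sb_totient m
  have hm' : (0:ℝ) < m := by exact_mod_cast hm
  have hpr : ∀ q ∈ m.primeFactors, (2:ℝ) ≤ q := fun q hq => by
    exact_mod_cast (Nat.prime_of_mem_primeFactors hq).two_le
  have h2 := sb_tele m.primeFactors (fun q hq => (Nat.prime_of_mem_primeFactors hq).two_le)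
  have h3 : ∏ q ∈ m.primeFactors, (1 - 1 / (q:ℝ)^2)
      = (∏ q ∈ m.primeFactors, (1 - 1 / (q:ℝ))) * ∏ q ∈ m.primeFactors, (1 + 1 / (q:ℝ)) := by
    rw [← prod_mul_distrib]
    apply prod_congr rfl
    intro q _
    ring
  have h4 : ∏ q ∈ m.primeFactors, (1 + 1 / (q:ℝ)) ≤ ∑ d ∈ m.divisors, 1 / (d : ℝ) := by
    rw [Finset.prod_one_add]
    calc ∑ t ∈ m.primeFactors.powerset, ∏ q ∈ t, 1 / (q:ℝ)
        = ∑ t ∈ m.primeFactors.powerset, 1 / ((∏ q ∈ t, q : ℕ) : ℝ) := by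
          apply sum_congr rfl
          intro t _
          rw [prod_div_distrib]
          simp
      _ = ∑ d ∈ m.primeFactors.powerset.image (fun t => ∏ q ∈ t, q), 1 / (d:ℝ) := by
          rw [sum_image]
          intro a ha b hb h
          simp only [coe_powerset, Set.mem_preimage, Set.mem_powerset_iff, coe_subset] at ha hb
          have h' := congrArg Nat.primeFactors h
          simp only at h'
          rwa [Nat.primeFactors_prod (fun q hq => Nat.prime_of_mem_primeFactors (ha hq)),
            Nat.primeFactors_prod (fun q hq => Nat.prime_of_mem_primeFactors (hb hq))] at h'
      _ ≤ _ := by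
          apply sum_le_sum_of_subset_of_nonneg
          · intro d hd
            simp only [mem_image, mem_powerset] at hd
            obtain ⟨t, ht, rfl⟩ := hd
            rw [Nat.mem_divisors]
            exact ⟨(prod_dvd_prod_of_subset _ _ _ ht).trans (Nat.prod_primeFactors_dvd m), hm.ne'⟩
          · intros; positivity
  have hphi : (0:ℝ) < m.totient := by exact_mod_cast Nat.totient_pos.2 hm
  have h5 : ∏ q ∈ m.primeFactors, (1 - 1 / (q : ℝ)) = m.totient / m := by
    rw [← h1]; field_simp
  rw [h3, h5] at h2
  have h6 : (1:ℝ)/2 ≤ m.totient / m * ∑ d ∈ m.divisors, 1 / (d : ℝ) := by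
    refine h2.trans ?_
    gcongr
  rw [div_le_iff₀ hphi]
  calc (1:ℝ) ≤ 2 * (m.totient / m * ∑ d ∈ m.divisors, 1 / (d : ℝ)) := by linarith
    _ = _ := by ring

open Finset in
theorem sb_log_sum (a b : ℕ) (ha : 1 ≤ a) (hab : a ≤ b) :
    ∑ k ∈ Icc a b, 1 / (k : ℝ) ≤ 1 + Real.log ((b:ℝ) / a) := by
  induction b, hab using Nat.le_induction with
  | base =>
    have h : (1:ℝ) ≤ a := by exact_mod_cast ha
    simp only [Icc_self, sum_singleton]
    rw [div_self (by positivity), Real.log_one, add_zero, div_le_one (by positivity)]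
    exact h
  | succ b hab ih =>
    have h : (1:ℝ) ≤ a := by exact_mod_cast ha
    have hb : (1:ℝ) ≤ b := by exact_mod_cast ha.trans hab
    rw [sum_Icc_succ_top (by omega)]
    have e : Real.log (((b+1:ℕ):ℝ) / a) = Real.log ((b:ℝ)/a) - Real.log ((b:ℝ)/((b:ℝ)+1)) := by
      push_cast
      rw [Real.log_div (by positivity) (by positivity), Real.log_div (by positivity) (by positivity),
        Real.log_div (by positivity) (by positivity)]
      ring
    have := Real.log_le_sub_one_of_pos (show 0 < (b:ℝ)/((b:ℝ)+1) by positivity)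
    have e2 : (b:ℝ)/((b:ℝ)+1) - 1 = - (1 / ((b+1:ℕ):ℝ)) := by
      push_cast; field_simp; ring
    rw [e]
    linarith

open Finset in
theorem sb_log_sum' (α K : ℝ) (hα : 0 < α) (hK : 2 ≤ K) (s : Finset ℕ)
    (hs : ∀ k ∈ s, 1 ≤ k ∧ α ≤ (k:ℝ) ∧ (k:ℝ) ≤ α * K) :
    ∑ k ∈ s, 1 / (k : ℝ) ≤ 1 + Real.log K := by
  rcases s.eq_empty_or_nonempty with rfl | hne
  · have := Real.log_nonneg (show 1 ≤ K by linarith)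
    simp; linarith
  · set a := s.min' hne
    set b := s.max' hne
    have ha := hs a (s.min'_mem hne)
    have hb := hs b (s.max'_mem hne)
    have hsub : s ⊆ Icc a b := fun k hk => mem_Icc.2 ⟨s.min'_le k hk, s.le_max' k hk⟩
    have h1 := sb_log_sum a b ha.1 (s.min'_le _ (s.max'_mem hne))
    have ha0 : (1:ℝ) ≤ a := by exact_mod_cast ha.1
    have hb0 : (1:ℝ) ≤ b := by exact_mod_cast hb.1
    calc _ ≤ ∑ k ∈ Icc a b, 1 / (k : ℝ) :=
          sum_le_sum_of_subset_of_nonneg hsub (fun _ _ _ => by positivity)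
      _ ≤ _ := h1
      _ ≤ _ := by
          gcongr
          rw [div_le_iff₀ (by positivity)]
          nlinarith

open Finset in
theorem sb_phi_sum (α K : ℝ) (hα : 0 < α) (hK : 2 ≤ K) (s : Finset ℕ)
    (hs : ∀ k ∈ s, 1 ≤ k ∧ α ≤ (k:ℝ) ∧ (k:ℝ) ≤ α * K) :
    ∑ m ∈ s, 1 / (m.totient : ℝ) ≤ 12 * Real.log K := by
  set D := s.sup id with hD
  have hle : ∀ m ∈ s, m ≤ D := fun m hm => Finset.le_sup (f := id) hm
  have hlogK : Real.log 2 ≤ Real.log K := Real.log_le_log (by norm_num) hK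
  have hl2 := Real.log_two_gt_d9
  calc ∑ m ∈ s, 1 / (m.totient : ℝ)
      ≤ ∑ m ∈ s, ∑ d ∈ Icc 1 D, (if d ∣ m then 2 / ((m:ℝ) * d) else 0) := by
        apply sum_le_sum
        intro m hm
        refine (sb_inv_totient m (hs m hm).1).trans ?_
        rw [mul_sum, ← sum_filter]
        apply le_of_eq_of_le (b := ∑ d ∈ m.divisors, 2 / ((m:ℝ) * d))
        · apply sum_congr rfl
          intro d _
          rw [div_mul_div_comm, mul_one]
        · apply sum_le_sum_of_subset_of_nonneg
          · intro d hd
            simp only [mem_filter, mem_Icc]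
            have := Nat.dvd_of_mem_divisors hd
            exact ⟨⟨Nat.pos_of_mem_divisors hd, (Nat.le_of_dvd (hs m hm).1 this).trans (hle m hm)⟩, this⟩
          · intros; positivity
    _ = ∑ d ∈ Icc 1 D, ∑ m ∈ s with d ∣ m, 2 / ((m:ℝ) * d) := by
        rw [sum_comm]
        simp only [sum_filter]
    _ ≤ ∑ d ∈ Icc 1 D, 2 / (d:ℝ)^2 * (1 + Real.log K) := by
        apply sum_le_sum
        intro d hd
        have hd1 : 1 ≤ d := (mem_Icc.1 hd).1
        have hd0 : (0:ℝ) < d := by exact_mod_cast hd1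
        have h := sb_log_sum' (α / d) K (by positivity) hK ((s.filter (fun m => d ∣ m)).image (fun m => m / d)) ?_
        · rw [sum_image] at h
          · have e : ∀ m ∈ s.filter (fun m => d ∣ m), 2 / ((m:ℝ) * d) = 2 / (d:ℝ)^2 * (1 / ((m / d : ℕ) : ℝ)) := by
              intro m hm
              obtain ⟨k, rfl⟩ := (mem_filter.1 hm).2
              rw [Nat.mul_div_cancel_left _ hd1]
              push_cast
              rw [div_mul_div_comm]
              congr 1 <;> ring
            rw [sum_congr rfl e, ← mul_sum]
            gcongr
          · intro a ha b hb hab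
            have ha := (mem_filter.1 (mem_coe.1 ha)).2
            have hb := (mem_filter.1 (mem_coe.1 hb)).2
            obtain ⟨k, rfl⟩ := ha
            obtain ⟨l, rfl⟩ := hb
            simp only [Nat.mul_div_cancel_left _ hd1] at hab
            rw [hab]
        · intro k hk
          simp only [mem_image, mem_filter] at hk
          obtain ⟨m, ⟨hm, ⟨l, rfl⟩⟩, rfl⟩ := hk
          rw [Nat.mul_div_cancel_left _ hd1]
          obtain ⟨g1, g2, g3⟩ := hs _ hm
          push_cast at g2 g3
          refine ⟨?_, ?_, ?_⟩
          · rcases Nat.eq_zero_or_pos l with rfl | h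
            · simp at g1
            · exact h
          · rw [div_le_iff₀ hd0]; linarith
          · rw [div_mul_eq_mul_div, le_div_iff₀ hd0]; linarith
    _ = 2 * (∑ d ∈ Icc 1 D, 1 / (d:ℝ)^2) * (1 + Real.log K) := by
        rw [← sum_mul, mul_sum]
        congr 1
        apply sum_congr rfl
        intro d _
        rw [mul_one_div]
    _ ≤ 2 * 2 * (1 + Real.log K) := by
        have : ∑ d ∈ Icc 1 D, 1 / (d:ℝ)^2 ≤ 2 := by
          have full : ∀ n : ℕ, ∑ d ∈ Icc 1 n, 1 / (d:ℝ)^2 ≤ 2 - 1 / (n:ℝ) := by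
            intro n
            induction n with
            | zero => norm_num
            | succ n ih =>
              rw [sum_Icc_succ_top (by omega)]
              rcases Nat.eq_zero_or_pos n with rfl | hn
              · norm_num
              have hn0 : (0:ℝ) < n := by exact_mod_cast hn
              have : 1 / (((n+1 : ℕ)):ℝ)^2 ≤ 1/(n:ℝ) - 1/((n+1:ℕ):ℝ) := by
                push_cast
                rw [div_sub_div _ _ (by positivity) (by positivity),
                  div_le_div_iff₀ (by positivity) (by positivity)]
                nlinarith
              linarith
          have := full D
          have h0 : (0:ℝ) ≤ 1 / (D:ℝ) := by positivity
          linarith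
        gcongr
        linarith
    _ ≤ _ := by nlinarith

noncomputable def sbF (P' : ℕ) : ℕ →* ℝ where
  toFun n := if n = 0 then 0 else
    2 ^ (n.primeFactorsList.countP (fun q => decide (q ∣ P'))) / (n : ℝ)
  map_one' := by simp
  map_mul' a b := by
    by_cases ha : a = 0
    · simp [ha]
    by_cases hb : b = 0
    · simp [hb]
    simp only [ha, hb, mul_eq_zero, or_self, if_false]
    rw [(Nat.perm_primeFactorsList_mul ha hb).countP_eq, List.countP_append, pow_add]
    push_cast
    rw [div_mul_div_comm]

theorem sbF_prime (P' q : ℕ) (hq : q.Prime) :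
    sbF P' q = if q ∣ P' then 2 / (q : ℝ) else 1 / (q : ℝ) := by
  simp only [sbF, MonoidHom.coe_mk, OneHom.coe_mk, hq.ne_zero, if_false,
    Nat.primeFactorsList_prime hq]
  split_ifs with h <;> simp [h]

theorem sbF_nonneg (P' n : ℕ) : 0 ≤ sbF P' n := by
  simp only [sbF, MonoidHom.coe_mk, OneHom.coe_mk]
  split_ifs
  · exact le_rfl
  · positivity

theorem sbF_lt_one (P' q : ℕ) (hP' : ¬ 2 ∣ P') (hq : q.Prime) : sbF P' q < 1 := by
  rw [sbF_prime P' q hq]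
  have h2 : (2:ℝ) ≤ q := by exact_mod_cast hq.two_le
  split_ifs with h
  · have : q ≠ 2 := by rintro rfl; exact hP' h
    have h3 : 3 ≤ q := by have := hq.two_le; omega
    have h3 : (3:ℝ) ≤ q := by exact_mod_cast h3
    rw [div_lt_one (by positivity)]; linarith
  · rw [div_lt_one (by positivity)]; linarith

open Finset in
theorem sbF_ge (P' n : ℕ) (hn : n ≠ 0) :
    ((n.divisors.filter (fun b => ∀ q, q.Prime → q ∣ b → q ∣ P')).card : ℝ) / n ≤ sbF P' n := by
  induction n using induction_on_primes with
  | zero => exact absurd rfl hn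
  | one =>
    have := card_filter_le (Nat.divisors 1) (fun b => ∀ q, q.Prime → q ∣ b → q ∣ P')
    simp only [Nat.divisors_one, card_singleton] at this
    simp only [Nat.divisors_one, Nat.cast_one, div_one, map_one]
    exact_mod_cast this
  | prime_mul q n hq ih =>
    have hn0 : n ≠ 0 := by rintro rfl; simp at hn
    have ih := ih hn0
    rw [map_mul, sbF_prime P' q hq]
    have hq0 : (0:ℝ) < q := by exact_mod_cast hq.pos
    have hnpos : (0:ℝ) < n := by exact_mod_cast Nat.pos_of_ne_zero hn0
    set A := n.divisors.filter (fun b => ∀ q, q.Prime → q ∣ b → q ∣ P') with hA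
    by_cases h : q ∣ P'
    · rw [if_pos h]
      have hc : ((q * n).divisors.filter (fun b => ∀ q, q.Prime → q ∣ b → q ∣ P')).card ≤ 2 * A.card := by
        have hsub : (q * n).divisors.filter (fun b => ∀ q, q.Prime → q ∣ b → q ∣ P')
            ⊆ A ∪ A.image (fun b => q * b) := by
          intro b hb
          simp only [mem_filter, Nat.mem_divisors] at hb
          obtain ⟨⟨hb1, _⟩, hb2⟩ := hb
          simp only [mem_union, mem_image, hA, mem_filter, Nat.mem_divisors]
          by_cases hqb : q ∣ b
          · obtain ⟨c, rfl⟩ := hqb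
            right
            exact ⟨c, ⟨⟨Nat.dvd_of_mul_dvd_mul_left hq.pos hb1, hn0⟩,
              fun r hr hrc => hb2 r hr (hrc.mul_left q)⟩, rfl⟩
          · left
            refine ⟨⟨?_, hn0⟩, hb2⟩
            exact Nat.Coprime.dvd_of_dvd_mul_left ((Nat.Prime.coprime_iff_not_dvd hq).2 hqb).symm hb1
        calc _ ≤ _ := card_le_card hsub
          _ ≤ _ := card_union_le _ _
          _ ≤ A.card + A.card := Nat.add_le_add_left card_image_le _
          _ = _ := by ring
      have hc' : (((q * n).divisors.filter (fun b => ∀ q, q.Prime → q ∣ b → q ∣ P')).card : ℝ) ≤ 2 * A.card := by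
        exact_mod_cast hc
      calc _ ≤ 2 * (A.card : ℝ) / ((q * n : ℕ) : ℝ) := by gcongr
        _ = 2 / q * (A.card / n) := by push_cast; field_simp
        _ ≤ _ := by gcongr
    · rw [if_neg h]
      have hc : ((q * n).divisors.filter (fun b => ∀ q, q.Prime → q ∣ b → q ∣ P')).card ≤ A.card := by
        apply card_le_card
        intro b hb
        simp only [mem_filter, Nat.mem_divisors] at hb
        obtain ⟨⟨hb1, _⟩, hb2⟩ := hb
        simp only [hA, mem_filter, Nat.mem_divisors]
        have hqb : ¬ q ∣ b := fun hqb => h (hb2 q hq hqb)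
        refine ⟨⟨?_, hn0⟩, hb2⟩
        exact Nat.Coprime.dvd_of_dvd_mul_left ((Nat.Prime.coprime_iff_not_dvd hq).2 hqb).symm hb1
      calc _ ≤ (A.card : ℝ) / ((q * n : ℕ) : ℝ) := by gcongr
        _ = 1 / q * (A.card / n) := by push_cast; field_simp
        _ ≤ _ := by gcongr

open Finset in
theorem sb_conv (P' T : ℕ) :
    (∑ a ∈ Icc 1 T, 1 / (a:ℝ)) * (∑ b ∈ (Icc 1 T).filter (fun b => ∀ q, q.Prime → q ∣ b → q ∣ P'), 1 / (b:ℝ))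
      ≤ ∑ n ∈ Icc 1 (T * T), sbF P' n := by
  set B := (Icc 1 T).filter (fun b => ∀ q, q.Prime → q ∣ b → q ∣ P') with hB
  rw [sum_mul_sum, ← sum_product']
  have hmap : ∀ x ∈ Icc 1 T ×ˢ B, x.1 * x.2 ∈ Icc 1 (T * T) := by
    rintro ⟨a, b⟩ h
    simp only [hB, mem_product, mem_filter, mem_Icc] at h ⊢
    exact ⟨Nat.mul_pos h.1.1 h.2.1.1, Nat.mul_le_mul h.1.2 h.2.1.2⟩
  rw [← sum_fiberwise_of_maps_to hmap]
  apply sum_le_sum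
  intro n hn
  have hn1 := (mem_Icc.1 hn).1
  refine le_trans ?_ (sbF_ge P' n (by omega))
  have hn0 : (0:ℝ) < n := by exact_mod_cast hn1
  have e : ∀ x ∈ (Icc 1 T ×ˢ B).filter (fun x => x.1 * x.2 = n), 1 / (x.1:ℝ) * (1 / (x.2:ℝ)) = 1 / n := by
    rintro ⟨a, b⟩ h
    have := (mem_filter.1 h).2
    simp only at this
    rw [← this, one_div_mul_one_div]
    push_cast; rfl
  rw [sum_congr rfl e, sum_const, nsmul_eq_mul, mul_one_div]
  gcongr
  apply card_le_card_of_injOn (fun x => x.2)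
  · rintro ⟨a, b⟩ h
    simp only [hB, coe_filter, mem_product, mem_filter, mem_Icc, Set.mem_ofPred_eq, Nat.mem_divisors] at h ⊢
    exact ⟨⟨⟨a, by rw [← h.2]; ring⟩, by omega⟩, h.1.2.2⟩
  · rintro ⟨a, b⟩ h ⟨c, d⟩ h' hbd
    simp only [hB, coe_filter, mem_product, mem_filter, mem_Icc, Set.mem_ofPred_eq] at h h' hbd
    subst hbd
    have : a = c := Nat.eq_of_mul_eq_mul_right h.1.2.1.1 (h.2.trans h'.2.symm)
    rw [this]

open Finset in
theorem sb_rad (P' R P : ℕ) (hP' : ¬ 2 ∣ P') (hP0 : P ≠ 0) (hP : ∀ q, q.Prime → q ≤ R → q ∣ P) :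
    ∑ n ∈ Icc 1 R, sbF P' n
      ≤ ∑ l ∈ P.divisors with l ≤ R, sbF P' l * ∏ q ∈ l.primeFactors, (1 - sbF P' q)⁻¹ := by
  have hmap : ∀ n ∈ Icc 1 R, (∏ q ∈ n.primeFactors, q) ∈ P.divisors.filter (fun l => l ≤ R) := by
    intro n hn
    rw [mem_Icc] at hn
    simp only [mem_filter, Nat.mem_divisors]
    refine ⟨⟨?_, hP0⟩, (Nat.le_of_dvd hn.1 (Nat.prod_primeFactors_dvd n)).trans hn.2⟩
    apply Finset.prod_primes_dvd
    · intro q hq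
      exact (Nat.prime_of_mem_primeFactors hq).prime
    · intro q hq
      exact hP q (Nat.prime_of_mem_primeFactors hq)
        ((Nat.le_of_dvd hn.1 (Nat.dvd_of_mem_primeFactors hq)).trans hn.2)
  rw [← sum_fiberwise_of_maps_to hmap]
  apply sum_le_sum
  intro l hl
  simp only [mem_filter, Nat.mem_divisors] at hl
  have hl0 : l ≠ 0 := ne_zero_of_dvd_ne_zero hP0 hl.1.1
  have hlpos : 0 < l := Nat.pos_of_ne_zero hl0
  obtain ⟨hsm, hsum⟩ := EulerProduct.summable_and_hasSum_factoredNumbers_prod_filter_prime_geometric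
    (f := sbF P') (fun {p} hp => by
      rw [Real.norm_of_nonneg (sbF_nonneg _ _)]; exact sbF_lt_one P' p hP' hp) l.primeFactors
  rw [filter_true_of_mem (fun q hq => Nat.prime_of_mem_primeFactors hq)] at hsum
  rw [← hsum.tsum_eq]
  set A := (Icc 1 R).filter (fun n => ∏ q ∈ n.primeFactors, q = l) with hA
  have hAdvd : ∀ n ∈ A, l ∣ n := by
    intro n hn
    rw [← (mem_filter.1 hn).2]
    exact Nat.prod_primeFactors_dvd n
  have e : ∀ n ∈ A, sbF P' n = sbF P' l * sbF P' (n / l) := by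
    intro n hn
    rw [← map_mul, Nat.mul_div_cancel' (hAdvd n hn)]
  rw [sum_congr rfl e, ← mul_sum]
  apply mul_le_mul_of_nonneg_left _ (sbF_nonneg _ _)
  have hmem : ∀ n ∈ A, n / l ∈ Nat.factoredNumbers l.primeFactors := by
    intro n hn
    have hn1 : n ≠ 0 := by
      have := (mem_Icc.1 (mem_filter.1 hn).1).1
      omega
    have hd := hAdvd n hn
    apply Nat.mem_factoredNumbers_of_primeFactors_subset
    · exact (Nat.div_pos (Nat.le_of_dvd (Nat.pos_of_ne_zero hn1) hd) hlpos).ne'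
    · have h1 : (n / l).primeFactors ⊆ n.primeFactors := Nat.primeFactors_mono (Nat.div_dvd_of_dvd hd) hn1
      have h2 : l.primeFactors = n.primeFactors := by
        rw [← (mem_filter.1 hn).2, Nat.primeFactors_prod (fun q hq => Nat.prime_of_mem_primeFactors hq)]
      rw [h2]; exact h1
  have hinj : Set.InjOn (fun n => n / l) A := by
    intro a ha b hb hab
    have := congrArg (fun t => l * t) hab
    simpa only [Nat.mul_div_cancel' (hAdvd a ha), Nat.mul_div_cancel' (hAdvd b hb)] using this
  rw [← sum_image (f := fun t => sbF P' t) hinj]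
  have hsub := hsum.summable
  have hs1 : Summable (Set.indicator (Nat.factoredNumbers l.primeFactors) (fun t => sbF P' t)) :=
    summable_subtype_iff_indicator.1 hsub
  rw [_root_.tsum_subtype (Nat.factoredNumbers l.primeFactors) (fun t => sbF P' t)]
  refine le_trans (le_of_eq ?_) (hs1.sum_le_tsum (A.image (fun n => n / l)) ?_)
  · apply sum_congr rfl
    intro t ht
    obtain ⟨n, hn, rfl⟩ := mem_image.1 ht
    rw [Set.indicator_of_mem (hmem n hn)]
  · intro t _
    exact Set.indicator_nonneg (fun t _ => sbF_nonneg _ _) t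


open Finset in
theorem sb_fiber (N : ℕ) (a : ℕ → ℕ) (Q : ℕ → Prop) :
    ∑ v ∈ (Icc 1 N).image a, (if Q v then (((Icc 1 N).filter (fun n => a n = v)).card : ℝ) else 0)
      = (((Icc 1 N).filter (fun n => Q (a n))).card : ℝ) := by
  have h := sum_fiberwise_of_maps_to (s := Icc 1 N) (t := (Icc 1 N).image a) (g := a)
    (fun n hn => mem_image_of_mem a hn) (fun n => if Q (a n) then (1:ℝ) else 0)
  rw [card_filter]
  push_cast
  rw [← h]
  apply sum_congr rfl
  intro v _
  rw [sum_congr rfl (g := fun _ => if Q v then (1:ℝ) else 0)]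
  · rw [sum_const, nsmul_eq_mul]
    split_ifs <;> simp
  · intro n hn
    rw [(mem_filter.1 hn).2]

noncomputable def sbP' (k Y : ℕ) : ℕ :=
  ∏ q ∈ (Finset.range (Y + 1)).filter (fun q => q.Prime ∧ ¬ q ∣ k), q

theorem sbP'_dvd (k Y q : ℕ) (hq : q.Prime) : q ∣ sbP' k Y ↔ q ≤ Y ∧ ¬ q ∣ k := by
  unfold sbP'
  rw [hq.prime.dvd_finsetProd_iff]
  constructor
  · rintro ⟨r, hr, hqr⟩
    simp only [Finset.mem_filter, Finset.mem_range] at hr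
    rw [Nat.prime_dvd_prime_iff_eq hq hr.2.1] at hqr
    subst hqr
    exact ⟨by omega, hr.2.2⟩
  · rintro ⟨h1, h2⟩
    exact ⟨q, by simp only [Finset.mem_filter, Finset.mem_range]; exact ⟨by omega, hq, h2⟩, dvd_rfl⟩

noncomputable def sbS (m N R P' : ℕ) (hP' : ¬ 2 ∣ P') : BoundingSieve where
  support := (Finset.Icc 1 N).image (fun n => n * Nat.gcd (m * n - 1) P')
  prodPrimes := primorial R
  prodPrimes_squarefree := by
    unfold primorial
    exact Finset.squarefree_prod_of_pairwise_isCoprime (by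
      intro a ha b hb hab
      simp only [Finset.coe_filter, Set.mem_ofPred_eq] at ha hb
      simp only [Function.onFun]
      exact Nat.coprime_iff_isRelPrime.1 ((Nat.coprime_primes ha.2 hb.2).2 hab)) (by
      intro a ha
      exact (Finset.mem_filter.1 ha).2.prime.squarefree)
  weights := fun v => (((Finset.Icc 1 N).filter (fun n => n * Nat.gcd (m * n - 1) P' = v)).card : ℝ)
  weights_nonneg := fun _ => Nat.cast_nonneg _
  totalMass := N
  nu := ArithmeticFunction.prodPrimeFactors (fun q => sbF P' q)
  nu_mult := ArithmeticFunction.IsMultiplicative.prodPrimeFactors _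
  nu_pos_of_prime := by
    intro p hp _
    rw [ArithmeticFunction.prodPrimeFactors_apply hp.ne_zero, hp.primeFactors, Finset.prod_singleton,
      sbF_prime P' p hp]
    have : (0:ℝ) < p := by exact_mod_cast hp.pos
    split_ifs <;> positivity
  nu_lt_one_of_prime := by
    intro p hp _
    rw [ArithmeticFunction.prodPrimeFactors_apply hp.ne_zero, hp.primeFactors, Finset.prod_singleton]
    exact sbF_lt_one P' p hP' hp

theorem sb_mem (m P' n d : ℕ) (hm : 0 < m) (hn : 1 ≤ n) (hd : Squarefree d) :
    d ∣ n * Nat.gcd (m * n - 1) P' ↔ ∀ q ∈ d.primeFactors, (q ∣ n ∨ (q ∣ P' ∧ m * n ≡ 1 [MOD q])) := by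
  have hmn : 1 ≤ m * n := Nat.mul_pos hm hn
  have h1 : ∀ q, q.Prime → ((q ∣ n ∨ (q ∣ P' ∧ m * n ≡ 1 [MOD q])) ↔ q ∣ n * Nat.gcd (m * n - 1) P') := by
    intro q hq
    rw [hq.dvd_mul, Nat.dvd_gcd_iff, ← Nat.modEq_iff_dvd' hmn, and_comm, Nat.ModEq.comm]
  constructor
  · intro h q hq
    rw [h1 q (Nat.prime_of_mem_primeFactors hq)]
    exact (Nat.dvd_of_mem_primeFactors hq).trans h
  · intro h
    rw [← Nat.prod_primeFactors_of_squarefree hd]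
    apply Finset.prod_primes_dvd
    · intro q hq; exact (Nat.prime_of_mem_primeFactors hq).prime
    · intro q hq
      rw [← h1 q (Nat.prime_of_mem_primeFactors hq)]
      exact h q hq

open Finset in
theorem sb_sieve (m k N T Y : ℕ) (hm : 0 < m) (hk : 0 < k) (hmk : m ∣ k) (h2k : 2 ∣ k)
    (hY : 1 ≤ Y) (hYT : Y ≤ T) (s : Finset ℕ)
    (hs : ∀ p ∈ s, p.Prime ∧ T * T < p ∧ p ≤ N ∧
      ∀ q, q.Prime → q ≤ Y → ¬ q ∣ k → ¬ q ∣ m * p - 1) :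
    (s.card : ℝ) ≤ N / (Real.log ((T:ℝ) + 1) * ((k.totient : ℝ) / k * Real.log ((Y:ℝ) + 1)))
      + ((T * T : ℕ) : ℝ) ^ 8 := by
  set P' := sbP' k Y with hP'def
  have hP'2 : ¬ 2 ∣ P' := by
    rw [sbP'_dvd k Y 2 Nat.prime_two]
    tauto
  have hmP : Nat.Coprime m P' := by
    apply Nat.Coprime.prod_right
    intro q hq
    simp only [mem_filter] at hq
    apply Nat.Coprime.symm
    rw [Nat.Prime.coprime_iff_not_dvd hq.2.1]
    exact fun h => hq.2.2 (h.trans hmk)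
  let S := sbS m N (T * T) P' hP'2
  have hT1 : 1 ≤ T := hY.trans hYT
  have hnu : ∀ d, d ∣ S.prodPrimes → S.nu d =
      ((range d).filter (fun n => ∀ q ∈ d.primeFactors, (q ∣ n ∨ (q ∣ P' ∧ m * n ≡ 1 [MOD q])))).card / (d:ℝ)
      ∧ 1 ≤ ((range d).filter (fun n => ∀ q ∈ d.primeFactors, (q ∣ n ∨ (q ∣ P' ∧ m * n ≡ 1 [MOD q])))).card := by
    intro d hd
    have hsq : Squarefree d := BoundingSieve.squarefree_of_dvd_prodPrimes hd
    have hd0 : d ≠ 0 := hsq.ne_zero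
    have hom := sb_omega (fun q n => q ∣ n ∨ (q ∣ P' ∧ m * n ≡ 1 [MOD q])) (by
      intro q n
      apply or_congr
      · rw [Nat.dvd_mod_iff dvd_rfl]
      · apply and_congr Iff.rfl
        have : m * (n % q) ≡ m * n [MOD q] := (Nat.mod_modEq n q).mul_left m
        exact ⟨fun h => this.trans h, fun h => this.symm.trans h⟩) d.primeFactors
      (fun q hq => Nat.prime_of_mem_primeFactors hq)
    rw [Nat.prod_primeFactors_of_squarefree hsq] at hom
    have hc : ((range d).filter (fun n => ∀ q ∈ d.primeFactors, (q ∣ n ∨ (q ∣ P' ∧ m * n ≡ 1 [MOD q])))).card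
        = ∏ q ∈ d.primeFactors, (if q ∣ P' then 2 else 1) := by
      rw [← prod_congr rfl (fun q hq => sb_local m P' q (Nat.prime_of_mem_primeFactors hq) hmP)]
      convert hom
    rw [hc]
    constructor
    · show ArithmeticFunction.prodPrimeFactors (fun q => sbF P' q) d = _
      rw [ArithmeticFunction.prodPrimeFactors_apply hd0]
      conv_rhs => rw [← Nat.prod_primeFactors_of_squarefree hsq]
      rw [Nat.primeFactors_prod (fun q hq => Nat.prime_of_mem_primeFactors hq)]
      push_cast
      rw [← prod_div_distrib]
      apply prod_congr rfl
      intro q hq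
      rw [sbF_prime P' q (Nat.prime_of_mem_primeFactors hq)]
      split_ifs <;> rfl
    · apply Nat.one_le_iff_ne_zero.2
      rw [prod_ne_zero_iff]
      intro q _
      split_ifs <;> norm_num
  have hmain := sb_selberg S (T * T) (Nat.mul_pos hT1 hT1) ?_ ?_
  rotate_left
  · intro d hd
    have hsq : Squarefree d := BoundingSieve.squarefree_of_dvd_prodPrimes hd
    have hd0 : 0 < d := Nat.pos_of_ne_zero hsq.ne_zero
    have h1 : S.multSum d = ((Icc 1 N).filter (fun n => d ∣ n * Nat.gcd (m * n - 1) P')).card := by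
      have h := sb_fiber N (fun n => n * Nat.gcd (m * n - 1) P') (fun v => d ∣ v)
      refine Eq.trans ?_ (h.trans ?_)
      · apply sum_congr
        · congr
        · intro v _
          congr
      · congr
    have h2 : (Icc 1 N).filter (fun n => d ∣ n * Nat.gcd (m * n - 1) P')
        = (Icc 1 N).filter (fun n => ∀ q ∈ d.primeFactors, (q ∣ n ∨ (q ∣ P' ∧ m * n ≡ 1 [MOD q]))) := by
      apply filter_congr
      intro n hn
      exact sb_mem m P' n d hm (mem_Icc.1 hn).1 hsq
    have h3 := sb_count (fun n => ∀ q ∈ d.primeFactors, (q ∣ n ∨ (q ∣ P' ∧ m * n ≡ 1 [MOD q]))) d hd0 (by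
      intro n
      refine forall₂_congr fun q hq => ?_
      have hqd := Nat.dvd_of_mem_primeFactors hq
      apply or_congr
      · rw [Nat.dvd_mod_iff hqd]
      · apply and_congr Iff.rfl
        have : m * (n % d) ≡ m * n [MOD q] := ((Nat.mod_modEq n d).of_dvd hqd).mul_left m
        exact ⟨fun h => this.trans h, fun h => this.symm.trans h⟩) N
    have h4 : S.totalMass = N := rfl
    have h5 : S.rem d = S.multSum d - S.nu d * S.totalMass := rfl
    rw [h5, h1, h2, (hnu d hd).1, h4]
    have h6 : (((range d).filter (fun n => ∀ q ∈ d.primeFactors, (q ∣ n ∨ (q ∣ P' ∧ m * n ≡ 1 [MOD q])))).card : ℝ) ≤ d := by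
      have := card_filter_le (range d) (fun n => ∀ q ∈ d.primeFactors, (q ∣ n ∨ (q ∣ P' ∧ m * n ≡ 1 [MOD q])))
      rw [card_range] at this
      exact_mod_cast this
    refine le_trans ?_ h6
    convert h3 using 1
    all_goals congr
  · intro d hd
    rw [(hnu d hd).1]
    have := (hnu d hd).2
    gcongr
    exact_mod_cast this
  have hsift : (s.card : ℝ) ≤ S.siftedSum := by
    have h1 : S.siftedSum = ((Icc 1 N).filter (fun n => Nat.Coprime (primorial (T * T)) (n * Nat.gcd (m * n - 1) P'))).card := by
      have h := sb_fiber N (fun n => n * Nat.gcd (m * n - 1) P') (fun v => Nat.Coprime (primorial (T * T)) v)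
      refine Eq.trans ?_ (h.trans ?_)
      · apply sum_congr
        · congr
        · intro v _
          congr
      · congr
    rw [h1]
    norm_cast
    apply card_le_card
    intro p hp
    obtain ⟨g1, g2, g3, g4⟩ := hs p hp
    rw [mem_filter, mem_Icc]
    refine ⟨⟨g1.one_lt.le, g3⟩, ?_⟩
    apply Nat.Coprime.prod_left
    intro q hq
    simp only [mem_filter, mem_range] at hq
    rw [Nat.Prime.coprime_iff_not_dvd hq.2, hq.2.dvd_mul, Nat.dvd_gcd_iff]
    rintro (h | ⟨h, h'⟩)
    · rw [Nat.prime_dvd_prime_iff_eq hq.2 g1] at h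
      omega
    · rw [sbP'_dvd k Y q hq.2] at h'
      exact g4 q hq.2 h'.1 h'.2 h
  refine hsift.trans (hmain.trans ?_)
  have hTpos : (0:ℝ) < Real.log ((T:ℝ) + 1) := Real.log_pos (by
    have : (1:ℝ) ≤ T := by exact_mod_cast hT1
    linarith)
  have hYpos : (0:ℝ) < Real.log ((Y:ℝ) + 1) := Real.log_pos (by
    have : (1:ℝ) ≤ Y := by exact_mod_cast hY
    linarith)
  have hkpos : (0:ℝ) < k := by exact_mod_cast hk
  have hphi : (0:ℝ) < k.totient := by exact_mod_cast Nat.totient_pos.2 hk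
  have hSlow : Real.log ((T:ℝ) + 1) * ((k.totient : ℝ) / k * Real.log ((Y:ℝ) + 1))
      ≤ ∑ l ∈ S.prodPrimes.divisors with l ≤ T * T, S.selbergTerms l := by
    have e1 : ∀ l ∈ S.prodPrimes.divisors.filter (fun l => l ≤ T * T),
        S.selbergTerms l = sbF P' l * ∏ q ∈ l.primeFactors, (1 - sbF P' q)⁻¹ := by
      intro l hl
      have hlP := (Nat.mem_divisors.1 (mem_filter.1 hl).1).1
      have hsq : Squarefree l := BoundingSieve.squarefree_of_dvd_prodPrimes hlP
      rw [BoundingSieve.selbergTerms_apply]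
      have hn : ∀ n, n ≠ 0 → S.nu n = ∏ q ∈ n.primeFactors, sbF P' q := fun n hn =>
        ArithmeticFunction.prodPrimeFactors_apply hn
      congr 1
      · rw [hn l hsq.ne_zero, ← map_prod, Nat.prod_primeFactors_of_squarefree hsq]
      · apply prod_congr rfl
        intro q hq
        have hqp := Nat.prime_of_mem_primeFactors hq
        rw [hn q hqp.ne_zero, hqp.primeFactors, prod_singleton]
    rw [sum_congr rfl e1]
    refine le_trans ?_ (sb_rad P' (T * T) S.prodPrimes hP'2 BoundingSieve.prodPrimes_ne_zero ?_)
    · refine le_trans ?_ (sb_conv P' T)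
      apply mul_le_mul (sb_log_le T) _ (by positivity) (by positivity)
      have hc := sb_coprime_sum Y k.primeFactors (fun q hq => Nat.prime_of_mem_primeFactors hq)
      have ht : ∏ q ∈ k.primeFactors, (1 - 1 / (q : ℝ)) = k.totient / k := by
        rw [← sb_totient k]; field_simp
      rw [ht] at hc
      calc _ ≤ (k.totient : ℝ) / k * ∑ n ∈ Icc 1 Y, 1 / (n : ℝ) := by
            gcongr
            exact sb_log_le Y
        _ ≤ _ := hc
        _ ≤ _ := by
            apply sum_le_sum_of_subset_of_nonneg
            · intro n hn
              simp only [mem_filter, mem_Icc] at hn ⊢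
              refine ⟨⟨hn.1.1, hn.1.2.trans hYT⟩, ?_⟩
              intro q hq hqn
              rw [sbP'_dvd k Y q hq]
              refine ⟨(Nat.le_of_dvd hn.1.1 hqn).trans hn.1.2, ?_⟩
              intro hqk
              exact hn.2 q (Nat.mem_primeFactors.2 ⟨hq, hqk, hk.ne'⟩) hqn
            · intros; positivity
    · intro q hq hqT
      show q ∣ primorial (T * T)
      apply dvd_prod_of_mem (fun q => q)
      simp only [mem_filter, mem_range]
      exact ⟨by omega, hq⟩
  have h4 : S.totalMass = N := rfl
  rw [h4]
  gcongr

open Filter in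
theorem sb_event (ε : ℝ) (h0 : 0 < ε) (h1 : ε < 1) : ∀ᶠ x : ℝ in atTop,
    1 < x ∧ 1 ≤ Real.log (Real.log (Real.log x)) ∧ 1 ≤ Real.log (Real.log x) ∧
    Real.log (Real.log (Real.log x)) ≤ Real.log (Real.log x) / 64 ∧
    1 ≤ Real.log x ∧ Real.log x ≤ x ^ ((1:ℝ)/8) ∧ Real.log (Real.log x) ≤ Real.log x := by
  have t1 := Real.tendsto_log_atTop
  have t2 := t1.comp t1
  have t3 := t1.comp t2
  have e1 : ∀ᶠ x : ℝ in atTop, Real.log x ≤ x / 64 := by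
    have := Real.isLittleO_log_id_atTop.bound (show (0:ℝ) < 1/64 by norm_num)
    filter_upwards [this, eventually_ge_atTop 1] with x hx hx1
    rw [Real.norm_eq_abs, Real.norm_eq_abs, id, abs_of_nonneg (Real.log_nonneg hx1),
      abs_of_nonneg (by linarith)] at hx
    linarith
  have e2 : ∀ᶠ x : ℝ in atTop, Real.log x ≤ x ^ ((1:ℝ)/8) := by
    have := (isLittleO_log_rpow_atTop (show (0:ℝ) < 1/8 by norm_num)).bound (show (0:ℝ) < 1 by norm_num)
    filter_upwards [this, eventually_ge_atTop 1] with x hx hx1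
    rw [Real.norm_eq_abs, Real.norm_eq_abs, abs_of_nonneg (Real.log_nonneg hx1),
      abs_of_nonneg (by positivity)] at hx
    linarith
  filter_upwards [eventually_gt_atTop 1, t3.eventually_ge_atTop 1, t2.eventually_ge_atTop 1,
    t2.eventually e1, t1.eventually_ge_atTop 1, e2] with x a1 a2 a3 a4 a5 a6
  refine ⟨a1, a2, a3, a4, a5, a6, ?_⟩
  have := Real.log_le_sub_one_of_pos (show 0 < Real.log x by linarith)
  linarith

theorem sb_real (w L l lt ly U z N c T2 k t m fm M fM : ℝ) (hw : 1 ≤ w) (hL : 0 < L) (hl : 0 < l)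
    (hLw : L ≤ w ^ 8) (hlw : l ≤ w ^ 8) (hlt : L / 64 ≤ lt) (hly : l ≤ ly) (hz : w ^ 56 ≤ z)
    (hm : 0 < m) (hzU : z ≤ U / m) (hN : N ≤ U / m) (hT0 : 0 ≤ T2)
    (hT : T2 ≤ w ^ 2) (hk : k = 2 * m * M) (hM : 0 < M) (hfm : 0 < fm) (hfM : 0 < fM)
    (hfm' : fm ≤ m) (hfM' : fM ≤ M) (ht : fm * fM ≤ t)
    (hc : c ≤ N / (lt * (t / k * ly)) + T2 ^ 8) :
    c ≤ 129 * (U * M / (L * l * fM)) * (1 / fm) := by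
  have hw0 : 0 < w := by linarith
  have hz0 : 0 < z := lt_of_lt_of_le (by positivity) hz
  have hUm : 0 < U / m := by linarith
  have hU : 0 < U := by
    rcases (div_pos_iff.1 hUm) with h | h
    · exact h.1
    · linarith [h.2]
  have hk0 : 0 < k := by rw [hk]; positivity
  have hff : 0 < fm * fM := by positivity
  have a1 : N / (lt * (t / k * ly)) ≤ (U / m) / (L / 64 * ((fm * fM) / k * l)) := by
    have hlt0 : 0 < lt := by linarith [div_pos hL (show (0:ℝ) < 64 by norm_num)]
    have : L / 64 * ((fm * fM) / k * l) ≤ lt * (t / k * ly) := by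
      gcongr
      exact div_nonneg (by linarith) hk0.le
    calc N / (lt * (t / k * ly)) ≤ (U / m) / (lt * (t / k * ly)) := by
          apply div_le_div_of_nonneg_right hN
          exact le_trans (by positivity) this
      _ ≤ _ := by
          apply div_le_div_of_nonneg_left hUm.le (by positivity) this
  have a2 : (U / m) / (L / 64 * ((fm * fM) / k * l)) = 128 * (U * M / (L * l * fM)) * (1 / fm) := by
    rw [hk]; field_simp; norm_num
  have a3 : T2 ^ 8 ≤ (U * M / (L * l * fM)) * (1 / fm) := by
    have b1 : T2 ^ 8 ≤ w ^ 16 := by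
      calc T2 ^ 8 ≤ (w ^ 2) ^ 8 := by gcongr
        _ = w ^ 16 := by ring
    have b2 : w ^ 16 ≤ (U / m) / (L * l) := by
      rw [le_div_iff₀ (by positivity)]
      calc w ^ 16 * (L * l) ≤ w ^ 16 * (w ^ 8 * w ^ 8) := by gcongr
        _ = w ^ 32 := by ring
        _ ≤ w ^ 56 := pow_le_pow_right₀ hw (by norm_num)
        _ ≤ _ := hz.trans hzU
    have b3 : (U / m) / (L * l) ≤ (U / fm) / (L * l) * (M / fM) := by
      have : 1 ≤ M / fM := by rw [le_div_iff₀ hfM]; linarith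
      calc (U / m) / (L * l) ≤ (U / fm) / (L * l) := by gcongr
        _ = (U / fm) / (L * l) * 1 := by ring
        _ ≤ _ := by gcongr
    refine b1.trans (b2.trans (b3.trans (le_of_eq ?_)))
    field_simp
  rw [a2] at a1
  linarith

/-- For any `K ≥ 2`,
`∑_{U/(zK) ≤ m < U/z} |R_m^{(M)}| ≪ U·M·log K/((log x)(log y)·φ(M))`. -/
theorem stmt5 :
    ∃ A : ℝ, 0 < A ∧ ∀ ε : ℝ, 0 < ε → ε < 1 → ∀ CU : ℝ, 0 < CU →
    ∃ κ : ℝ, 0 < κ ∧ ∃ x₀ : ℝ, ∀ x : ℝ, x ≥ x₀ →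
    ∀ M : ℕ, 1 ≤ M → (M : ℝ) ≤ κ * x ^ ((1 : ℝ) / 5) →
    ∀ K : ℝ, 2 ≤ K →
    (∑ m ∈ (Finset.range (⌊UU CU M ε x / zz x⌋₊ + 1)).filter (fun m : ℕ =>
        UU CU M ε x / (zz x * K) ≤ (m : ℝ) ∧ (m : ℝ) < UU CU M ε x / zz x),
      ((RmM CU ε x M m).card : ℝ))
      ≤ A * UU CU M ε x * (M : ℝ) * Real.log K /
          (Real.log x * Real.log (yy ε x) * (M.totient : ℝ)) := by
  refine ⟨1548, by norm_num, ?_⟩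
  intro ε hε0 hε1 CU hCU
  refine ⟨1, one_pos, ?_⟩
  obtain ⟨x₀, hx₀⟩ := Filter.eventually_atTop.1 (sb_event ε hε0 hε1)
  refine ⟨x₀, ?_⟩
  intro x hx M hM _ K hK
  obtain ⟨hx1, hL3, hL2, hL32, hL, hLx, hL2L⟩ := hx₀ x hx
  have i2 : Real.log^[2] x = Real.log (Real.log x) := rfl
  have i3 : Real.log^[3] x = Real.log (Real.log (Real.log x)) := rfl
  have hx0 : 0 < x := by linarith
  set w : ℝ := x ^ ((1:ℝ)/64) with hwdef
  have hw0 : 0 < w := Real.rpow_pos_of_pos hx0 _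
  have hw1 : 1 < w := Real.one_lt_rpow hx1 (by norm_num)
  have hwx : w ^ 64 = x := by
    rw [hwdef, ← Real.rpow_natCast, ← Real.rpow_mul hx0.le]
    norm_num
  have hw8 : x ^ ((1:ℝ)/8) = w ^ 8 := by
    rw [hwdef, ← Real.rpow_natCast, ← Real.rpow_mul hx0.le]
    norm_num
  rw [hw8] at hLx
  have hlogw : Real.log w = Real.log x / 64 := by
    rw [hwdef, Real.log_rpow hx0]; ring
  have hly : Real.log (yy ε x) = (1 - ε) * Real.log x * Real.log (Real.log (Real.log x)) / Real.log (Real.log x) := by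
    rw [yy, Real.log_exp, i2, i3]
  have hl0 : 0 < Real.log (yy ε x) := by
    rw [hly]
    have : 0 < 1 - ε := by linarith
    positivity
  have hl64 : Real.log (yy ε x) ≤ Real.log x / 64 := by
    rw [hly, div_le_iff₀ (by linarith)]
    calc (1 - ε) * Real.log x * Real.log (Real.log (Real.log x))
        ≤ 1 * Real.log x * (Real.log (Real.log x) / 64) := by
          gcongr
          linarith
      _ = _ := by ring
  have hy0 : 0 < yy ε x := Real.exp_pos _
  have hyw : yy ε x ≤ w := by
    rw [← Real.log_le_log_iff hy0 hw0, hlogw]; exact hl64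
  have hy1 : 1 ≤ yy ε x := by
    by_contra h
    push Not at h
    linarith [Real.log_neg hy0 h]
  have hz : w ^ 56 ≤ zz x := by
    rw [zz, i2, le_div_iff₀ (by linarith)]
    calc w ^ 56 * Real.log (Real.log x) ≤ w ^ 56 * w ^ 8 := by
          gcongr
          linarith
      _ = x := by rw [← hwx]; ring
  have hz0 : 0 < zz x := lt_of_lt_of_le (by positivity) hz
  have hM0 : (0:ℝ) < M := by exact_mod_cast hM
  have hfM : (0:ℝ) < M.totient := by exact_mod_cast Nat.totient_pos.2 hM
  have hU0 : 0 < UU CU M ε x := by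
    rw [UU, i2]; positivity
  set U := UU CU M ε x with hUdef
  have hα : 0 < U / (zz x * K) := by positivity
  set B : ℝ := U * M / (Real.log x * Real.log (yy ε x) * M.totient) with hB
  have hB0 : 0 ≤ B := by positivity
  have key : ∀ m ∈ (Finset.range (⌊U / zz x⌋₊ + 1)).filter (fun m : ℕ =>
        U / (zz x * K) ≤ (m : ℝ) ∧ (m : ℝ) < U / zz x),
      ((RmM CU ε x M m).card : ℝ) ≤ 129 * B * (1 / (m.totient : ℝ)) := by
    intro m hm
    obtain ⟨_, hm1, hm2⟩ := Finset.mem_filter.1 hm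
    have hmR : (0:ℝ) < m := by linarith
    have hm0 : 0 < m := by exact_mod_cast hmR
    have hfm : (0:ℝ) < m.totient := by exact_mod_cast Nat.totient_pos.2 hm0
    have hzU : zz x ≤ U / m := by
      rw [lt_div_iff₀ hz0] at hm2
      rw [le_div_iff₀ hmR]
      linarith
    have hTT : ((⌊w⌋₊ * ⌊w⌋₊ : ℕ) : ℝ) ≤ w ^ 2 := by
      push_cast
      rw [pow_two]
      have := Nat.floor_le hw0.le
      gcongr
    have hTz : ((⌊w⌋₊ * ⌊w⌋₊ : ℕ) : ℝ) < zz x :=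
      lt_of_le_of_lt hTT (lt_of_lt_of_le (pow_lt_pow_right₀ hw1 (by norm_num)) hz)
    have hsv := sb_sieve m (2 * m * M) ⌊U / (m:ℝ)⌋₊ ⌊w⌋₊ ⌊yy ε x⌋₊ hm0 (by positivity)
      (Dvd.intro_left 2 rfl |>.mul_right M) ((Dvd.intro m rfl).mul_right M)
      (Nat.one_le_floor_iff _ |>.2 hy1) (Nat.floor_mono hyw) (RmM CU ε x M m) (by
        intro p hp
        rw [RmM, Finset.mem_filter, Finset.mem_range] at hp
        obtain ⟨g1, g2, g3, g4⟩ := hp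
        refine ⟨g2, ?_, Nat.lt_succ_iff.1 g1, ?_⟩
        · have := hTz.trans g3
          exact_mod_cast this
        · intro q hq hqY hqk hqd
          have hqM : ¬ q ∣ M := fun h => hqk (h.mul_left _)
          have hqP : q ∣ PM M (yy ε x) := by
            unfold PM
            apply Finset.dvd_prod_of_mem (fun q => q)
            rw [Finset.mem_filter, Finset.mem_range]
            exact ⟨by omega, hq, hqM⟩
          have := Nat.dvd_gcd hqd hqP
          rw [g4] at this
          exact hq.one_lt.ne' (Nat.dvd_one.1 this))
    refine sb_real w (Real.log x) (Real.log (yy ε x)) _ _ U (zz x) _ _ _ _ _ m m.totient M M.totient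
      hw1.le (by linarith) hl0 hLx (by linarith) ?_ ?_ hz hmR hzU (Nat.floor_le (by positivity))
      (by positivity) hTT (by push_cast; rfl) hM0 hfm hfM (by exact_mod_cast Nat.totient_le m)
      (by exact_mod_cast Nat.totient_le M) ?_ hsv
    · rw [← hlogw]
      exact Real.log_le_log hw0 (Nat.lt_floor_add_one w).le
    · exact Real.log_le_log hy0 (Nat.lt_floor_add_one _).le
    · have h1 := Nat.totient_super_multiplicative 2 (m * M)
      have h2 := Nat.totient_super_multiplicative m M
      rw [Nat.totient_two, one_mul, ← mul_assoc] at h1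
      exact_mod_cast h2.trans h1
  refine (Finset.sum_le_sum key).trans ?_
  rw [← Finset.mul_sum]
  have hps := sb_phi_sum (U / (zz x * K)) K hα hK ((Finset.range (⌊U / zz x⌋₊ + 1)).filter (fun m : ℕ =>
        U / (zz x * K) ≤ (m : ℝ) ∧ (m : ℝ) < U / zz x)) (by
    intro m hm
    obtain ⟨_, hm1, hm2⟩ := Finset.mem_filter.1 hm
    have hmR : (0:ℝ) < m := by linarith
    refine ⟨by exact_mod_cast hmR, hm1, ?_⟩
    have : U / (zz x * K) * K = U / zz x := by field_simp
    rw [this]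
    exact hm2.le)
  calc _ ≤ 129 * B * (12 * Real.log K) := by gcongr
    _ = _ := by rw [hB]; ring
end

section
/- For every ε ∈ (0,1) and C_U > 0 there exist κ > 0 and a constant A > 0 such that: (i) for every η > 0 there is x₀ with ∑_{U/(z·(log₂x)²) ≤ m < U/z} |R_m^{(M)}| ≤ η·C_U·x/log x for all x ≥ x₀ and all M ≤ κ·x^{1/5}; and (ii) for all x large enough and all M ≤ κ·x^{1/5}, ∑_{1 ≤ m < U/(z·(log₂x)²)} |R_m^{(M)}| ≤ A·C_U·x/log x. Both sums are over integers m in the stated ranges. -/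
open scoped Classical

lemma crt_sum (a b : ℕ) (ha : 0 < a) (hb : 0 < b) (co : a.Coprime b) (g h : ℕ → ℝ)
    (hg : ∀ n, g (n + a) = g n) (hh : ∀ n, h (n + b) = h n) :
    ∑ n ∈ Finset.range (a * b), g n * h n
      = (∑ n ∈ Finset.range a, g n) * ∑ n ∈ Finset.range b, h n := by
  have hg' : ∀ n, g (n % a) = g n := fun n => (show Function.Periodic g a from hg).map_mod_nat n
  have hh' : ∀ n, h (n % b) = h n := fun n => (show Function.Periodic h b from hh).map_mod_nat n
  rw [Finset.sum_mul_sum, ← Finset.sum_product']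
  refine Finset.sum_nbij' (fun n => (n % a, n % b))
    (fun uv => (Nat.chineseRemainder co uv.1 uv.2 : ℕ)) ?_ ?_ ?_ ?_ ?_
  · intro n hn
    simp [Nat.mod_lt _ ha, Nat.mod_lt _ hb]
  · intro uv huv
    simp only [Finset.mem_range]
    exact Nat.chineseRemainder_lt_mul co _ _ ha.ne' hb.ne'
  · intro n hn
    simp only [Finset.mem_range] at hn
    have h1 := (Nat.chineseRemainder co (n % a) (n % b)).2
    have h2 := Nat.chineseRemainder_lt_mul co (n % a) (n % b) ha.ne' hb.ne'
    have h3 : ((Nat.chineseRemainder co (n % a) (n % b) : ℕ)) ≡ n [MOD a * b] :=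
      (Nat.modEq_and_modEq_iff_modEq_mul co).1
        ⟨h1.1.trans (Nat.mod_modEq _ _), h1.2.trans (Nat.mod_modEq _ _)⟩
    exact Nat.ModEq.eq_of_lt_of_lt h3 h2 hn
  · rintro ⟨u, v⟩ huv
    simp only [Finset.mem_product, Finset.mem_range] at huv
    have h1 := (Nat.chineseRemainder co u v).2
    have e1 : _ % a = u % a := h1.1
    have e2 : _ % b = v % b := h1.2
    rw [Nat.mod_eq_of_lt huv.1] at e1
    rw [Nat.mod_eq_of_lt huv.2] at e2
    simp [e1, e2]
  · intro n hn
    simp [hg', hh']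

lemma prod_sum_per (S : Finset ℕ) (hS : ∀ p ∈ S, p.Prime) (g : ℕ → ℕ → ℝ)
    (hg : ∀ p ∈ S, ∀ n, g p (n + p) = g p n) :
    ∑ n ∈ Finset.range (∏ p ∈ S, p), ∏ p ∈ S, g p n
      = ∏ p ∈ S, ∑ n ∈ Finset.range p, g p n := by
  induction S using Finset.induction_on with
  | empty => simp
  | insert p S hp ih =>
    have ih' := ih (fun q hq => hS q (Finset.mem_insert_of_mem hq))
      (fun q hq => hg q (Finset.mem_insert_of_mem hq))
    have hpp := hS p (Finset.mem_insert_self _ _)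
    rw [Finset.prod_insert hp, Finset.prod_insert hp, ← ih']
    simp_rw [Finset.prod_insert hp]
    refine crt_sum p (∏ q ∈ S, q) hpp.pos
      (Finset.prod_pos fun q hq => (hS q (Finset.mem_insert_of_mem hq)).pos) ?_ (g p)
      (fun n => ∏ q ∈ S, g q n) (hg p (Finset.mem_insert_self _ _)) ?_
    · refine Nat.Coprime.prod_right fun q hq => ?_
      refine (Nat.coprime_primes hpp (hS q (Finset.mem_insert_of_mem hq))).2 ?_
      rintro rfl; exact hp hq
    · intro n
      refine Finset.prod_congr rfl fun q hq => ?_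
      obtain ⟨c, hc⟩ := Finset.dvd_prod_of_mem (fun q : ℕ => q) hq
      have : Function.Periodic (g q) q := hg q (Finset.mem_insert_of_mem hq)
      rw [hc, mul_comm]
      simpa using this.nat_mul c n

lemma per_sum (q : ℕ) (hq : 0 < q) (F : ℕ → ℝ) (hF : ∀ n, F (n + q) = F n)
    (hb : ∀ n, |F n| ≤ 1) (N : ℕ) :
    |∑ n ∈ Finset.range N, F n - N * ((∑ n ∈ Finset.range q, F n) / q)| ≤ 2 * q := by
  have hq' : (0:ℝ) < q := by exact_mod_cast hq
  have bd : ∀ k : ℕ, |∑ n ∈ Finset.range k, F n| ≤ k := by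
    intro k
    calc _ ≤ ∑ n ∈ Finset.range k, |F n| := Finset.abs_sum_le_sum_abs _ _
      _ ≤ ∑ n ∈ Finset.range k, (1:ℝ) := Finset.sum_le_sum fun i _ => hb i
      _ = k := by simp
  have blk : ∀ k r : ℕ, ∑ n ∈ Finset.range (q * k + r), F n
      = k * (∑ n ∈ Finset.range q, F n) + ∑ n ∈ Finset.range r, F n := by
    intro k r
    induction k with
    | zero => simp
    | succ k ih =>
      have : q * (k+1) + r = q + (q * k + r) := by ring
      rw [this, Finset.sum_range_add]
      have : ∀ n, F (q + n) = F n := fun n => by rw [add_comm, hF]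
      simp_rw [this]
      rw [ih]; push_cast; ring
  have hN := Nat.div_add_mod N q
  set k := N / q
  set r := N % q
  have hr : r < q := Nat.mod_lt _ hq
  have hNr : (N:ℝ) = q * k + r := by exact_mod_cast hN.symm
  have e : ∑ n ∈ Finset.range N, F n - N * ((∑ n ∈ Finset.range q, F n) / q)
      = ∑ n ∈ Finset.range r, F n - (r / q) * (∑ n ∈ Finset.range q, F n) := by
    rw [hNr]
    conv_lhs => rw [← hN]
    rw [blk]
    field_simp; ring
  rw [e]
  have h1 := bd r
  have h2 := bd q
  have hr' : (r:ℝ) ≤ q := by exact_mod_cast hr.le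
  have h3 : |(r / q : ℝ) * (∑ n ∈ Finset.range q, F n)| ≤ 1 * q := by
    rw [abs_mul]
    refine mul_le_mul ?_ h2 (abs_nonneg _) zero_le_one
    rw [abs_of_nonneg (by positivity)]
    rw [div_le_one hq']; exact hr'
  have := abs_sub (∑ n ∈ Finset.range r, F n) ((r / q) * (∑ n ∈ Finset.range q, F n))
  linarith

lemma pair_sum (f : ℕ → ℕ → ℝ) (v : ℕ → ℝ) (S T : Finset ℕ) (hS : ∀ p ∈ S, p.Prime)
    (hT : ∀ p ∈ T, p.Prime)
    (hper : ∀ p n, f p (n + p) = f p n) (hb : ∀ p ∈ S ∪ T, ∀ n, |f p n| ≤ 1)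
    (h1 : ∀ p ∈ S ∪ T, ∑ n ∈ Finset.range p, f p n = 0)
    (h2 : ∀ p ∈ S ∪ T, ∑ n ∈ Finset.range p, f p n * f p n = p * v p) (N : ℕ) :
    |∑ n ∈ Finset.range N, (∏ p ∈ S, f p n) * (∏ p ∈ T, f p n)
      - N * (if S = T then ∏ p ∈ S, v p else 0)| ≤ 2 * ((∏ p ∈ S, (p:ℝ)) * ∏ p ∈ T, (p:ℝ)) := by
  set g : ℕ → ℕ → ℝ := fun p n => (if p ∈ S then f p n else 1) * (if p ∈ T then f p n else 1) with hg
  have hpr : ∀ p ∈ S ∪ T, p.Prime := fun p hp =>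
    (Finset.mem_union.1 hp).elim (hS p) (hT p)
  have e1 : ∀ n, (∏ p ∈ S, f p n) * (∏ p ∈ T, f p n) = ∏ p ∈ S ∪ T, g p n := by
    intro n
    simp only [hg]
    rw [Finset.prod_mul_distrib, Finset.prod_ite_mem, Finset.prod_ite_mem]
    congr 2
    · ext p; simp
    · ext p; simp
  have gper : ∀ p n, g p (n + p) = g p n := by
    intro p n; simp only [hg, hper]
  have qpos : 0 < ∏ p ∈ S ∪ T, p := Finset.prod_pos fun p hp => (hpr p hp).pos
  have key := per_sum (∏ p ∈ S ∪ T, p) qpos (fun n => ∏ p ∈ S ∪ T, g p n) ?_ ?_ N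
  · rw [prod_sum_per _ hpr g (fun p _ => gper p)] at key
    simp_rw [e1]
    have e2 : (∏ p ∈ S ∪ T, ∑ n ∈ Finset.range p, g p n) / ((∏ p ∈ S ∪ T, p : ℕ) : ℝ)
        = if S = T then ∏ p ∈ S, v p else 0 := by
      split_ifs with h
      · subst h
        rw [Finset.union_idempotent, Nat.cast_prod, ← Finset.prod_div_distrib]
        refine Finset.prod_congr rfl fun p hp => ?_
        have hp0 : (p:ℝ) ≠ 0 := by exact_mod_cast (hS p hp).ne_zero
        simp only [hg, hp, if_true]
        rw [h2 p (by simpa using hp)]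
        field_simp
      · have : ∃ p ∈ S ∪ T, ¬ (p ∈ S ∧ p ∈ T) := by
          by_contra hcon
          push Not at hcon
          apply h
          ext p
          exact ⟨fun hp => (hcon p (Finset.mem_union_left _ hp)).2,
            fun hp => (hcon p (Finset.mem_union_right _ hp)).1⟩
        obtain ⟨p, hp, hp'⟩ := this
        rw [Finset.prod_eq_zero hp, zero_div]
        rw [← h1 p hp]
        refine Finset.sum_congr rfl fun n _ => ?_
        simp only [hg]
        rcases Finset.mem_union.1 hp with h | h
        · have : p ∉ T := fun h' => hp' ⟨h, h'⟩
          simp [h, this]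
        · have : p ∉ S := fun h' => hp' ⟨h', h⟩
          simp [h, this]
    rw [e2] at key
    refine key.trans ?_
    gcongr
    rw [Nat.cast_prod, ← Finset.prod_union_inter]
    have : (1:ℝ) ≤ ∏ p ∈ S ∩ T, (p:ℝ) := by
      have : 1 ≤ ∏ p ∈ S ∩ T, p := Finset.prod_pos fun p hp =>
        (hS p (Finset.mem_inter.1 hp).1).pos
      rw [← Nat.cast_prod]; exact_mod_cast this
    exact le_mul_of_one_le_right (by positivity) this
  · intro n
    refine Finset.prod_congr rfl fun q hq => ?_
    obtain ⟨c, hc⟩ := Finset.dvd_prod_of_mem (fun q : ℕ => q) hq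
    have : Function.Periodic (g q) q := gper q
    rw [hc, mul_comm]
    simpa using this.nat_mul c n
  · intro n
    rw [Finset.abs_prod]
    refine Finset.prod_le_one (fun _ _ => abs_nonneg _) fun p hp => ?_
    simp only [hg]
    rw [abs_mul]
    refine mul_le_one₀ ?_ (abs_nonneg _) ?_
    · split_ifs
      · exact hb p hp n
      · simp
    · split_ifs
      · exact hb p hp n
      · simp

noncomputable def LL (w : ℕ → ℕ) (Q : ℕ) : ℝ :=
  ∑ l ∈ (Finset.Icc 1 Q).filter Squarefree, ∏ p ∈ l.primeFactors, ((w p : ℝ) / (p - w p))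

lemma selberg_bound (Q N : ℕ) (bad : ℕ → ℕ → Prop) (hper : ∀ p n, bad p (n + p) ↔ bad p n)
    (w : ℕ → ℕ) (hw : ∀ p, p.Prime → ((Finset.range p).filter (bad p)).card = w p)
    (hwp : ∀ p, p.Prime → w p < p) (A : Finset ℕ)
    (hA : ∀ n ∈ A, n < N ∧ ∀ p, p.Prime → p ≤ Q → ¬ bad p n) :
    (A.card : ℝ) * (LL w Q) ^ 2 ≤ N * LL w Q + 2 * (Q : ℝ) ^ 6 := by
  set δ : ℕ → ℝ := fun p => (w p : ℝ) / p with hδ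
  set f : ℕ → ℕ → ℝ := fun p n => (if bad p n then 1 else 0) - δ p with hf
  set I := (Finset.Icc 1 Q).filter Squarefree with hI
  set c : ℕ → ℝ := fun l => ∏ p ∈ l.primeFactors, (-(1 - δ p)⁻¹) with hc
  have hpl : ∀ l : ℕ, ∀ p ∈ l.primeFactors, p.Prime := fun l p hp => Nat.prime_of_mem_primeFactors hp
  have hδ0 : ∀ p, 0 ≤ δ p := fun p => by simp only [hδ]; positivity
  have hδ1 : ∀ p, p.Prime → δ p < 1 := fun p hp => by
    simp only [hδ]
    have : (0:ℝ) < p := by exact_mod_cast hp.pos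
    rw [div_lt_one this]; exact_mod_cast hwp p hp
  have hfper : ∀ p n, f p (n + p) = f p n := fun p n => by simp only [hf, hper]
  have hfb : ∀ p, p.Prime → ∀ n, |f p n| ≤ 1 := by
    intro p hp n
    have := hδ0 p; have := hδ1 p hp
    simp only [hf]; rw [abs_le]; split_ifs <;> constructor <;> linarith
  have hs : ∀ p, p.Prime → ∑ n ∈ Finset.range p, (if bad p n then (1:ℝ) else 0) = p * δ p := by
    intro p hp
    have : (p:ℝ) ≠ 0 := by exact_mod_cast hp.ne_zero
    rw [Finset.sum_boole, hw p hp]; simp only [hδ]; field_simp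
  have hf1 : ∀ p, p.Prime → ∑ n ∈ Finset.range p, f p n = 0 := by
    intro p hp
    simp only [hf]
    rw [Finset.sum_sub_distrib, hs p hp]; simp
  have hf2 : ∀ p, p.Prime → ∑ n ∈ Finset.range p, f p n * f p n = p * (δ p * (1 - δ p)) := by
    intro p hp
    have : ∀ n, f p n * f p n = (1 - 2 * δ p) * (if bad p n then (1:ℝ) else 0) + δ p ^ 2 := by
      intro n; simp only [hf]; split_ifs <;> ring
    simp_rw [this]
    rw [Finset.sum_add_distrib, ← Finset.mul_sum, hs p hp]; simp; ring
  set F : ℕ → ℝ := fun n => ∑ l ∈ I, c l * ∏ p ∈ l.primeFactors, f p n with hF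
  have hFA : ∀ n ∈ A, F n = LL w Q := by
    intro n hn
    simp only [hF, LL, ← hI]
    refine Finset.sum_congr rfl fun l hl => ?_
    simp only [hc]
    rw [← Finset.prod_mul_distrib]
    refine Finset.prod_congr rfl fun p hp => ?_
    have hpp := hpl l p hp
    simp only [hI, Finset.mem_filter, Finset.mem_Icc] at hl
    have hpQ : p ≤ Q := (Nat.le_of_mem_primeFactors hp).trans hl.1.2
    have hnb := (hA n hn).2 p hpp hpQ
    simp only [hf, hnb, if_false]
    have h1 := hδ1 p hpp
    have h0 : (0:ℝ) < p := by exact_mod_cast hpp.pos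
    have h2 : (1 - δ p) ≠ 0 := by linarith
    have h3 : (p:ℝ) - w p ≠ 0 := by
      have : (w p : ℝ) < p := by exact_mod_cast hwp p hpp
      linarith
    simp only [hδ] at h2 ⊢
    have : 1 - (w p : ℝ) / p = (p - w p) / p := by field_simp
    rw [this]; field_simp; ring
  have hcl : ∀ l ∈ I, |c l| ≤ l := by
    intro l hl
    simp only [hI, Finset.mem_filter, Finset.mem_Icc] at hl
    simp only [hc]
    rw [Finset.abs_prod]
    conv_rhs => rw [← Nat.prod_primeFactors_of_squarefree hl.2]
    rw [Nat.cast_prod]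
    refine Finset.prod_le_prod (fun _ _ => abs_nonneg _) fun p hp => ?_
    have hpp := hpl l p hp
    have h1 := hδ1 p hpp
    have h0 : (0:ℝ) < p := by exact_mod_cast hpp.pos
    rw [abs_neg, abs_of_pos (inv_pos.2 (by linarith))]
    have : 1 - (w p : ℝ) / p = (p - w p) / p := by field_simp
    simp only [hδ]
    rw [this, inv_div]
    have : (w p : ℝ) + 1 ≤ p := by exact_mod_cast hwp p hpp
    exact div_le_self h0.le (by linarith)
  have hIQ : (I.card : ℝ) ≤ Q := by
    have : I.card ≤ (Finset.Icc 1 Q).card := Finset.card_filter_le _ _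
    simp at this; exact_mod_cast this
  -- expand
  have hexp : ∑ n ∈ Finset.range N, F n ^ 2 = ∑ l ∈ I, ∑ l' ∈ I, c l * c l' *
      ∑ n ∈ Finset.range N, (∏ p ∈ l.primeFactors, f p n) * ∏ p ∈ l'.primeFactors, f p n := by
    simp only [hF, sq, Finset.sum_mul_sum]
    rw [Finset.sum_comm]
    refine Finset.sum_congr rfl fun l _ => ?_
    rw [Finset.sum_comm]
    refine Finset.sum_congr rfl fun l' _ => ?_
    rw [Finset.mul_sum]
    refine Finset.sum_congr rfl fun n _ => ?_
    ring
  have hterm : ∀ l ∈ I, ∀ l' ∈ I, c l * c l' *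
      ∑ n ∈ Finset.range N, (∏ p ∈ l.primeFactors, f p n) * ∏ p ∈ l'.primeFactors, f p n
      ≤ (if l = l' then N * ∏ p ∈ l.primeFactors, ((w p : ℝ) / (p - w p)) else 0)
        + 2 * (Q:ℝ) ^ 4 := by
    intro l hl l' hl'
    have key := pair_sum f (fun p => δ p * (1 - δ p)) l.primeFactors l'.primeFactors (hpl l) (hpl l')
      hfper (fun p hp => hfb p ((Finset.mem_union.1 hp).elim (hpl l p) (hpl l' p)))
      (fun p hp => hf1 p ((Finset.mem_union.1 hp).elim (hpl l p) (hpl l' p)))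
      (fun p hp => hf2 p ((Finset.mem_union.1 hp).elim (hpl l p) (hpl l' p))) N
    have c1 := hcl l hl
    have c2 := hcl l' hl'
    simp only [hI, Finset.mem_filter, Finset.mem_Icc] at hl hl'
    rw [← Nat.cast_prod, ← Nat.cast_prod, Nat.prod_primeFactors_of_squarefree hl.2,
      Nat.prod_primeFactors_of_squarefree hl'.2] at key
    set X := ∑ n ∈ Finset.range N, (∏ p ∈ l.primeFactors, f p n) * ∏ p ∈ l'.primeFactors, f p n
    have lQ : (l:ℝ) ≤ Q := by exact_mod_cast hl.1.2
    have lQ' : (l':ℝ) ≤ Q := by exact_mod_cast hl'.1.2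
    have hiff : l.primeFactors = l'.primeFactors ↔ l = l' := by
      constructor
      · intro h
        rw [← Nat.prod_primeFactors_of_squarefree hl.2, h,
          Nat.prod_primeFactors_of_squarefree hl'.2]
      · rintro rfl; rfl
    simp only [hiff] at key
    set Y := (N:ℝ) * (if l = l' then ∏ p ∈ l.primeFactors, (δ p * (1 - δ p)) else 0) with hY
    have e1 : c l * c l' * X = c l * c l' * Y + c l * c l' * (X - Y) := by ring
    have e2 : c l * c l' * Y =
        (if l = l' then N * ∏ p ∈ l.primeFactors, ((w p : ℝ) / (p - w p)) else 0) := by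
      rw [hY]
      split_ifs with h
      · subst h
        rw [mul_left_comm]
        congr 1
        simp only [hc]
        rw [← Finset.prod_mul_distrib, ← Finset.prod_mul_distrib]
        refine Finset.prod_congr rfl fun p hp => ?_
        have hpp := hpl l p hp
        have h1 := hδ1 p hpp
        have h0 : (0:ℝ) < p := by exact_mod_cast hpp.pos
        have h2 : (1 - δ p) ≠ 0 := by linarith
        have h3 : (p:ℝ) - w p ≠ 0 := by
          have : (w p : ℝ) < p := by exact_mod_cast hwp p hpp
          linarith
        have h4 : (w p : ℝ) / (p - w p) = δ p * (1 - δ p)⁻¹ := by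
          simp only [hδ] at h2 ⊢
          have : 1 - (w p : ℝ) / p = (p - w p) / p := by field_simp
          rw [this]; field_simp
        rw [h4]; field_simp
      · simp
    rw [e1, e2]
    refine add_le_add le_rfl ?_
    calc c l * c l' * (X - Y) ≤ |c l * c l' * (X - Y)| := le_abs_self _
      _ = |c l| * |c l'| * |X - Y| := by rw [abs_mul, abs_mul]
      _ ≤ Q * Q * (2 * (Q * Q)) := by
          have : |X - Y| ≤ 2 * (Q * Q) := key.trans (by gcongr)
          gcongr
          · exact c1.trans lQ
          · exact c2.trans lQ'
      _ = 2 * (Q:ℝ) ^ 4 := by ring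
  have hup : ∑ n ∈ Finset.range N, F n ^ 2 ≤ N * LL w Q + 2 * (Q : ℝ) ^ 6 := by
    rw [hexp]
    calc _ ≤ ∑ l ∈ I, ∑ l' ∈ I, ((if l = l' then N * ∏ p ∈ l.primeFactors, ((w p : ℝ) / (p - w p)) else 0)
        + 2 * (Q:ℝ) ^ 4) := Finset.sum_le_sum fun l hl => Finset.sum_le_sum fun l' hl' => hterm l hl l' hl'
      _ = N * LL w Q + I.card * I.card * (2 * (Q:ℝ)^4) := by
        simp_rw [Finset.sum_add_distrib, Finset.sum_ite_eq]
        simp only [LL, ← hI, Finset.mul_sum]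
        rw [Finset.sum_congr rfl (g := fun l => N * ∏ p ∈ l.primeFactors, ((w p : ℝ) / (p - w p)))
          (fun l hl => by simp [hl])]
        simp [mul_assoc]
      _ ≤ N * LL w Q + Q * Q * (2 * (Q:ℝ)^4) := by gcongr
      _ = _ := by ring
  refine le_trans ?_ hup
  calc (A.card : ℝ) * (LL w Q) ^ 2 = ∑ n ∈ A, F n ^ 2 := by
        rw [Finset.sum_congr rfl fun n hn => by rw [hFA n hn]]; simp
    _ ≤ _ := Finset.sum_le_sum_of_subset_of_nonneg
        (fun n hn => Finset.mem_range.2 (hA n hn).1) fun _ _ _ => sq_nonneg _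

lemma sum_le_of_inj {α β : Type*} (s : Finset α) (t : Finset β) (i : α → β)
    (hi : ∀ a ∈ s, i a ∈ t) (inj : ∀ a ∈ s, ∀ b ∈ s, i a = i b → a = b)
    (f : α → ℝ) (g : β → ℝ) (hfg : ∀ a ∈ s, f a ≤ g (i a)) (hg : ∀ b ∈ t, 0 ≤ g b) :
    ∑ a ∈ s, f a ≤ ∑ b ∈ t, g b := by
  calc ∑ a ∈ s, f a ≤ ∑ a ∈ s, g (i a) := Finset.sum_le_sum hfg
    _ = ∑ b ∈ s.image i, g b := (Finset.sum_image (fun a ha b hb h => inj a ha b hb h)).symm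
    _ ≤ _ := Finset.sum_le_sum_of_subset_of_nonneg
        (fun b hb => by
          obtain ⟨a, ha, rfl⟩ := Finset.mem_image.1 hb
          exact hi a ha) (fun b hb _ => hg b hb)

lemma sum_inv_sq_le (K : ℕ) : ∑ s ∈ Finset.Icc 1 K, ((s:ℝ) ^ 2)⁻¹ ≤ 2 := by
  have : ∀ n : ℕ, ∑ s ∈ Finset.Icc 1 (n+1), ((s:ℝ) ^ 2)⁻¹ ≤ 2 - 1 / (n+1) := by
    intro n
    induction n with
    | zero => norm_num
    | succ n ih =>
      rw [Finset.sum_Icc_succ_top (by omega)]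
      push_cast
      have : (((n:ℝ) + 1 + 1) ^ 2)⁻¹ ≤ 1 / ((n:ℝ) + 1) - 1 / ((n:ℝ) + 1 + 1) := by
        rw [div_sub_div _ _ (by positivity) (by positivity), inv_eq_one_div,
          div_le_div_iff₀ (by positivity) (by positivity)]
        nlinarith
      linarith
  cases K with
  | zero => simp
  | succ n => 
    have h := this n
    have : (0:ℝ) ≤ 1 / (n+1) := by positivity
    linarith

noncomputable def ss (k : ℕ) : ℝ := ∏ p ∈ k.primeFactors, (1 + (p:ℝ)⁻¹)

lemma ss_pos (k : ℕ) : 0 < ss k := Finset.prod_pos fun p _ => by positivity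

lemma ss_one_le (k : ℕ) : 1 ≤ ss k := by
  unfold ss
  have : (∏ p ∈ k.primeFactors, (1:ℝ)) ≤ ∏ p ∈ k.primeFactors, (1 + (p:ℝ)⁻¹) :=
    Finset.prod_le_prod (fun _ _ => zero_le_one) fun p _ => by
      have : (0:ℝ) ≤ (p:ℝ)⁻¹ := by positivity
      linarith
  simpa using this

lemma ss_eq (k : ℕ) (hk : k ≠ 0) :
    ss k = ∑ d ∈ k.divisors.filter Squarefree, (d:ℝ)⁻¹ := by
  rw [Nat.sum_divisors_filter_squarefree hk]
  unfold ss
  rw [Finset.prod_one_add]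
  have : (UniqueFactorizationMonoid.normalizedFactors k).toFinset = k.primeFactors := by
    ext p
    simp [Nat.factors_eq]
  rw [this]
  refine Finset.sum_congr rfl fun S hS => ?_
  rw [Finset.prod_val, Nat.cast_prod, Finset.prod_inv_distrib]
  simp

lemma ss_mul_le (a b : ℕ) (ha : a ≠ 0) (hb : b ≠ 0) : ss (a * b) ≤ ss a * ss b := by
  unfold ss
  rw [Nat.primeFactors_mul ha hb, ← Finset.prod_union_inter]
  exact le_mul_of_one_le_right (Finset.prod_nonneg fun p _ => by positivity) (by
    have : (∏ p ∈ a.primeFactors ∩ b.primeFactors, (1:ℝ)) ≤ ∏ p ∈ a.primeFactors ∩ b.primeFactors, (1 + (p:ℝ)⁻¹) :=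
      Finset.prod_le_prod (fun _ _ => zero_le_one) fun p _ => by
        have : (0:ℝ) ≤ (p:ℝ)⁻¹ := by positivity
        linarith
    simpa using this)

lemma ss_two : ss 2 ≤ 3 / 2 := by
  unfold ss
  rw [Nat.Prime.primeFactors Nat.prime_two]; norm_num

lemma ss_totient (k : ℕ) : ss k * (k.totient / k : ℝ) ≤ 1 := by
  rcases Nat.eq_zero_or_pos k with rfl | hk
  · simp
  have h : (k.totient : ℝ) = k * ∏ p ∈ k.primeFactors, (1 - (p:ℝ)⁻¹) := by
    have := Nat.totient_eq_mul_prod_factors k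
    have h2 := congrArg (fun q : ℚ => (q:ℝ)) this
    push_cast at h2
    exact h2
  have hk' : (k:ℝ) ≠ 0 := by exact_mod_cast hk.ne'
  rw [h, mul_div_cancel_left₀ _ hk']
  unfold ss
  rw [← Finset.prod_mul_distrib]
  refine Finset.prod_le_one (fun p hp => ?_) fun p hp => ?_
  · have : (1:ℝ) ≤ p := by exact_mod_cast (Nat.prime_of_mem_primeFactors hp).one_lt.le
    have := inv_le_one_of_one_le₀ this
    have : (0:ℝ) ≤ 1 - (p:ℝ)⁻¹ := by linarith
    positivity
  · nlinarith [sq_nonneg ((p:ℝ)⁻¹)]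

lemma T1_lower (K : ℕ) :
    Real.log (K + 1) ≤ 2 * ∑ a ∈ (Finset.Icc 1 K).filter Squarefree, (a:ℝ)⁻¹ := by
  have h0 : Real.log (K + 1) ≤ ∑ n ∈ Finset.Icc 1 K, (n:ℝ)⁻¹ := by
    have := log_add_one_le_harmonic K
    rw [harmonic_eq_sum_Icc] at this
    push_cast at this
    exact this
  refine h0.trans ?_
  choose u v huv using Nat.sq_mul_squarefree
  have h1 : ∑ n ∈ Finset.Icc 1 K, (n:ℝ)⁻¹ ≤
      ∑ q ∈ ((Finset.Icc 1 K).filter Squarefree) ×ˢ (Finset.Icc 1 K), ((q.1:ℝ)⁻¹ * ((q.2:ℝ)^2)⁻¹) := by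
    refine sum_le_of_inj _ _ (fun n => (u n, v n)) ?_ ?_ _ _ ?_ ?_
    · intro n hn
      simp only [Finset.mem_Icc] at hn
      obtain ⟨e, sq⟩ := huv n
      have hu : u n ≠ 0 := sq.ne_zero
      have hv : v n ≠ 0 := by rintro h; rw [h] at e; simp at e; omega
      have h1 : u n ≤ n := by
        conv_rhs => rw [← e]
        exact Nat.le_mul_of_pos_left _ (by positivity)
      have h2 : v n ≤ n := by
        conv_rhs => rw [← e]
        calc v n ≤ v n ^ 2 := Nat.le_self_pow (by norm_num) _
          _ ≤ _ := Nat.le_mul_of_pos_right _ (by positivity)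
      simp only [Finset.mem_product, Finset.mem_filter, Finset.mem_Icc]
      exact ⟨⟨⟨by omega, by omega⟩, sq⟩, by omega, by omega⟩
    · intro a _ b _ h
      simp only [Prod.mk.injEq] at h
      rw [← (huv a).1, ← (huv b).1, h.1, h.2]
    · intro n _
      simp only
      conv_lhs => rw [← (huv n).1]
      push_cast
      rw [mul_inv, mul_comm]
    · intro b _; positivity
  refine h1.trans ?_
  rw [Finset.sum_product]
  dsimp only
  rw [← Finset.sum_mul_sum, mul_comm]
  gcongr
  exact sum_inv_sq_le K

lemma T2_lower (K k : ℕ) (hk : k ≠ 0) :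
    ∑ a ∈ (Finset.Icc 1 K).filter Squarefree, (a:ℝ)⁻¹ ≤
      ss k * ∑ a ∈ (Finset.Icc 1 K).filter (fun a => Squarefree a ∧ a.Coprime k), (a:ℝ)⁻¹ := by
  rw [ss_eq k hk, Finset.sum_mul_sum, ← Finset.sum_product']
  refine sum_le_of_inj _ _ (fun n => (n.gcd k, n / n.gcd k)) ?_ ?_ _ _ ?_ ?_
  · intro n hn
    simp only [Finset.mem_filter, Finset.mem_Icc] at hn
    obtain ⟨⟨h1, h2⟩, sq⟩ := hn
    have hd : n.gcd k ∣ n := Nat.gcd_dvd_left _ _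
    have e : n.gcd k * (n / n.gcd k) = n := Nat.mul_div_cancel' hd
    have sq' : Squarefree (n.gcd k * (n / n.gcd k)) := by rw [e]; exact sq
    have co := Nat.coprime_of_squarefree_mul sq'
    simp only [Finset.mem_product, Finset.mem_filter, Finset.mem_Icc, Nat.mem_divisors]
    refine ⟨⟨⟨Nat.gcd_dvd_right _ _, hk⟩, sq.squarefree_of_dvd hd⟩, ⟨?_, (Nat.div_le_self _ _).trans h2⟩,
      sq.squarefree_of_dvd (Nat.div_dvd_of_dvd hd), ?_⟩
    · exact Nat.div_pos (Nat.le_of_dvd (by omega) hd) (Nat.gcd_pos_of_pos_left _ (by omega))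
    · refine Nat.coprime_of_dvd fun p hp h3 h4 => ?_
      have h5 : p ∣ n := h3.trans (Nat.div_dvd_of_dvd hd)
      have h6 : p ∣ n.gcd k := Nat.dvd_gcd h5 h4
      exact Nat.not_coprime_of_dvd_of_dvd hp.one_lt h6 h3 co
  · intro a _ b _ h
    simp only [Prod.mk.injEq] at h
    have e1 := Nat.mul_div_cancel' (Nat.gcd_dvd_left a k)
    have e2 := Nat.mul_div_cancel' (Nat.gcd_dvd_left b k)
    rw [h.2, h.1, e2] at e1
    exact e1.symm
  · intro n _
    simp only
    conv_lhs => rw [← Nat.mul_div_cancel' (Nat.gcd_dvd_left n k)]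
    push_cast
    rw [mul_inv]
  · intro b _; positivity

lemma pair_lower (K K' k : ℕ) :
    (∑ a ∈ (Finset.Icc 1 K).filter Squarefree, (a:ℝ)⁻¹) *
      (∑ a ∈ (Finset.Icc 1 K').filter (fun a => Squarefree a ∧ a.Coprime k), (a:ℝ)⁻¹) ≤
    2 * ∑ q ∈ (((Finset.Icc 1 K).filter Squarefree) ×ˢ
      ((Finset.Icc 1 K').filter (fun a => Squarefree a ∧ a.Coprime k))).filter
        (fun q => q.1.Coprime q.2), ((q.1 * q.2 : ℕ) : ℝ)⁻¹ := by
  set P := (((Finset.Icc 1 K).filter Squarefree) ×ˢ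
      ((Finset.Icc 1 K').filter (fun a => Squarefree a ∧ a.Coprime k))).filter
        (fun q => q.1.Coprime q.2) with hP
  rw [Finset.sum_mul_sum, ← Finset.sum_product']
  have : ∑ x ∈ ((Finset.Icc 1 K).filter Squarefree) ×ˢ
      ((Finset.Icc 1 K').filter (fun a => Squarefree a ∧ a.Coprime k)), (x.1:ℝ)⁻¹ * (x.2:ℝ)⁻¹ ≤
      ∑ y ∈ (Finset.Icc 1 K) ×ˢ P, (((y.1:ℝ)^2)⁻¹ * ((y.2.1 * y.2.2 : ℕ) : ℝ)⁻¹) := by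
    refine sum_le_of_inj _ _
      (fun x => (x.1.gcd x.2, (x.1 / x.1.gcd x.2, x.2 / x.1.gcd x.2))) ?_ ?_ _ _ ?_ ?_
    · rintro ⟨a, b⟩ hab
      simp only [Finset.mem_product, Finset.mem_filter, Finset.mem_Icc] at hab
      obtain ⟨⟨⟨a1, a2⟩, a3⟩, ⟨b1, b2⟩, b3, b4⟩ := hab
      have hda : a.gcd b ∣ a := Nat.gcd_dvd_left _ _
      have hdb : a.gcd b ∣ b := Nat.gcd_dvd_right _ _
      have gp : 0 < a.gcd b := Nat.gcd_pos_of_pos_left _ (by omega)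
      have ga : a.gcd b ≤ a := Nat.le_of_dvd (by omega) hda
      have gb : a.gcd b ≤ b := Nat.le_of_dvd (by omega) hdb
      simp only [hP, Finset.mem_product, Finset.mem_filter, Finset.mem_Icc]
      refine ⟨⟨gp, ga.trans a2⟩, ⟨⟨⟨Nat.div_pos ga gp, (Nat.div_le_self _ _).trans a2⟩,
        a3.squarefree_of_dvd (Nat.div_dvd_of_dvd hda)⟩, ⟨Nat.div_pos gb gp, (Nat.div_le_self _ _).trans b2⟩,
        b3.squarefree_of_dvd (Nat.div_dvd_of_dvd hdb), b4.coprime_dvd_left (Nat.div_dvd_of_dvd hdb)⟩, 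
        Nat.coprime_div_gcd_div_gcd gp⟩
    · rintro ⟨a, b⟩ _ ⟨a', b'⟩ _ h
      simp only [Prod.mk.injEq] at h
      obtain ⟨h1, h2, h3⟩ := h
      have e1 := Nat.mul_div_cancel' (Nat.gcd_dvd_left a b)
      have e2 := Nat.mul_div_cancel' (Nat.gcd_dvd_right a b)
      have e3 := Nat.mul_div_cancel' (Nat.gcd_dvd_left a' b')
      have e4 := Nat.mul_div_cancel' (Nat.gcd_dvd_right a' b')
      rw [h2, h1, e3] at e1
      rw [h3, h1, e4] at e2
      rw [e1, e2]
    · rintro ⟨a, b⟩ _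
      simp only
      conv_lhs => rw [← Nat.mul_div_cancel' (Nat.gcd_dvd_left a b)]
      conv_lhs =>
        enter [2, 1]
        rw [← Nat.mul_div_cancel' (Nat.gcd_dvd_right a b)]
      have e1 : ∀ u v w : ℕ, ((u * v : ℕ) : ℝ)⁻¹ * ((u * w : ℕ) : ℝ)⁻¹ =
        ((u:ℝ)^2)⁻¹ * ((v * w : ℕ) : ℝ)⁻¹ := by
        intro u v w; push_cast; simp only [mul_inv, sq]; ring
      refine le_of_eq ?_
      convert e1 (a.gcd b) (a / a.gcd b) (b / a.gcd b) using 4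
    · intro b _; positivity
  refine this.trans ?_
  rw [Finset.sum_product]
  dsimp only
  rw [← Finset.sum_mul_sum]
  gcongr
  exact sum_inv_sq_le K

lemma fiber_card (w : ℕ → ℕ) (hw1 : ∀ p, p.Prime → 1 ≤ w p) (l : ℕ) (B : Finset ℕ)
    (hB : ∀ b ∈ B, Squarefree b ∧ b ∣ l ∧ ∀ p, p.Prime → p ∣ b → 2 ≤ w p) (hl : l ≠ 0) :
    (B.card) ≤ ∏ p ∈ l.primeFactors, w p := by
  calc B.card ≤ (((l.primeFactors).filter (fun p => 2 ≤ w p)).powerset).card := by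
        refine Finset.card_le_card_of_injOn (fun b => b.primeFactors) ?_ ?_
        · intro b hb
          obtain ⟨h1, h2, h3⟩ := hB b hb
          simp only [Finset.coe_powerset, Set.mem_preimage, Set.mem_powerset_iff, Finset.coe_subset]
          intro p hp
          have hpp := Nat.prime_of_mem_primeFactors hp
          have hd := Nat.dvd_of_mem_primeFactors hp
          simp only [Finset.mem_filter, Nat.mem_primeFactors]
          exact ⟨⟨hpp, hd.trans h2, hl⟩, h3 p hpp hd⟩
        · intro a ha b hb h
          simp only at h
          rw [← Nat.prod_primeFactors_of_squarefree (hB a ha).1, h,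
            Nat.prod_primeFactors_of_squarefree (hB b hb).1]
    _ = ∏ p ∈ (l.primeFactors).filter (fun p => 2 ≤ w p), 2 := by
        rw [Finset.card_powerset, Finset.prod_const]
    _ ≤ ∏ p ∈ (l.primeFactors).filter (fun p => 2 ≤ w p), w p :=
        Finset.prod_le_prod' fun p hp => (Finset.mem_filter.1 hp).2
    _ ≤ _ := Finset.prod_le_prod_of_subset_of_one_le' (Finset.filter_subset _ _)
        fun p hp _ => hw1 p (Nat.prime_of_mem_primeFactors hp)

lemma LL_lower (w : ℕ → ℕ) (hw1 : ∀ p, p.Prime → 1 ≤ w p) (hwp : ∀ p, p.Prime → w p < p)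
    (K K' k : ℕ) (hk : k ≠ 0) (hw2 : ∀ p, p.Prime → p ≤ K' → ¬ p ∣ k → 2 ≤ w p) :
    Real.log (K + 1) * Real.log (K' + 1) ≤ 8 * ss k * LL w (K * K') := by
  set P := (((Finset.Icc 1 K).filter Squarefree) ×ˢ
      ((Finset.Icc 1 K').filter (fun a => Squarefree a ∧ a.Coprime k))).filter
        (fun q => q.1.Coprime q.2) with hP
  have main : ∑ q ∈ P, ((q.1 * q.2 : ℕ) : ℝ)⁻¹ ≤ LL w (K * K') := by
    rw [← Finset.sum_fiberwise_of_maps_to (s := P)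
      (t := (Finset.Icc 1 (K * K')).filter Squarefree) (g := fun q => q.1 * q.2)]
    · unfold LL
      refine Finset.sum_le_sum fun l hl => ?_
      simp only [Finset.mem_filter, Finset.mem_Icc] at hl
      have hl0 : l ≠ 0 := by omega
      rw [Finset.sum_congr rfl (g := fun _ => (l:ℝ)⁻¹) (fun q hq => by
        rw [(Finset.mem_filter.1 hq).2])]
      rw [Finset.sum_const, nsmul_eq_mul]
      set Fb := P.filter (fun q => q.1 * q.2 = l) with hFb
      have hc : Fb.card ≤ ∏ p ∈ l.primeFactors, w p := by
        have : Fb.card = (Fb.image Prod.snd).card := by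
          rw [Finset.card_image_of_injOn]
          rintro ⟨a, b⟩ h1 ⟨a', b'⟩ h2 h
          simp only [hFb, hP, Finset.coe_filter, Finset.mem_filter, Finset.mem_product, Finset.mem_Icc,
            Set.mem_ofPred_eq] at h1 h2
          simp only at h
          subst h
          have := h1.2.trans h2.2.symm
          have : a = a' := Nat.eq_of_mul_eq_mul_right (by omega) this
          rw [this]
        rw [this]
        refine fiber_card w hw1 l _ ?_ hl0
        intro b hb
        obtain ⟨⟨a, b'⟩, h1, rfl⟩ := Finset.mem_image.1 hb
        simp only [hFb, hP, Finset.mem_filter, Finset.mem_product, Finset.mem_Icc] at h1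
        obtain ⟨⟨⟨_, ⟨hb1, hb2⟩, hb3, hb4⟩, _⟩, he⟩ := h1
        refine ⟨hb3, ⟨a, by rw [← he, mul_comm]⟩, fun p hp hd => hw2 p hp ?_ ?_⟩
        · exact (Nat.le_of_dvd (by simp only; omega) hd).trans hb2
        · intro hpk
          exact Nat.not_coprime_of_dvd_of_dvd hp.one_lt hd hpk hb4
      have hc' : (Fb.card : ℝ) ≤ ∏ p ∈ l.primeFactors, (w p : ℝ) := by exact_mod_cast hc
      calc (Fb.card : ℝ) * (l:ℝ)⁻¹ ≤ (∏ p ∈ l.primeFactors, (w p : ℝ)) * (l:ℝ)⁻¹ := by gcongr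
        _ = ∏ p ∈ l.primeFactors, ((w p : ℝ) / p) := by
          conv_lhs => rw [← Nat.prod_primeFactors_of_squarefree hl.2]
          rw [Nat.primeFactors_prod (fun p hp => Nat.prime_of_mem_primeFactors hp)]
          rw [Finset.prod_div_distrib, Nat.cast_prod, div_eq_mul_inv]
        _ ≤ _ := by
          refine Finset.prod_le_prod (fun p _ => by positivity) fun p hp => ?_
          have hpp := Nat.prime_of_mem_primeFactors hp
          have : (w p : ℝ) < p := by exact_mod_cast hwp p hpp
          have h0 : (0:ℝ) ≤ w p := by positivity
          exact div_le_div_of_nonneg_left h0 (by linarith) (by linarith)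
    · rintro ⟨a, b⟩ h
      simp only [hP, Finset.mem_filter, Finset.mem_product, Finset.mem_Icc] at h ⊢
      obtain ⟨⟨⟨⟨a1, a2⟩, a3⟩, ⟨b1, b2⟩, b3, b4⟩, co⟩ := h
      exact ⟨⟨Nat.mul_pos a1 b1, Nat.mul_le_mul a2 b2⟩, (Nat.squarefree_mul co).2 ⟨a3, b3⟩⟩
  have h1 := T1_lower K
  have h2 := T1_lower K'
  have h3 := T2_lower K' k hk
  have h4 := pair_lower K K' k
  rw [← hP] at h4
  have l0 : 0 ≤ Real.log ((K':ℝ) + 1) := Real.log_nonneg (by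
    have : (0:ℝ) ≤ K' := by positivity
    linarith)
  have s0 := (ss_pos k).le
  set T1 := ∑ a ∈ (Finset.Icc 1 K).filter Squarefree, (a:ℝ)⁻¹
  set T1' := ∑ a ∈ (Finset.Icc 1 K').filter Squarefree, (a:ℝ)⁻¹
  set T2 := ∑ a ∈ (Finset.Icc 1 K').filter (fun a => Squarefree a ∧ a.Coprime k), (a:ℝ)⁻¹
  have t1 : 0 ≤ T1 := Finset.sum_nonneg fun _ _ => by positivity
  calc Real.log (K + 1) * Real.log (K' + 1) ≤ (2 * T1) * (2 * T1') := by gcongr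
    _ ≤ (2 * T1) * (2 * (ss k * T2)) := by gcongr
    _ = 4 * ss k * (T1 * T2) := by ring
    _ ≤ 4 * ss k * (2 * LL w (K * K')) := by
      refine mul_le_mul_of_nonneg_left ?_ (by positivity)
      linarith
    _ = _ := by ring

lemma harm_Icc (u v : ℕ) (hu : 1 ≤ u) (huv : u ≤ v) :
    ∑ m ∈ Finset.Icc u v, (m:ℝ)⁻¹ ≤ 1 + Real.log v - Real.log u := by
  induction v, huv using Nat.le_induction with
  | base =>
    simp
    exact inv_le_one_of_one_le₀ (by exact_mod_cast hu)
  | succ v hv ih =>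
    rw [Finset.sum_Icc_succ_top (by omega)]
    have hv0 : (0:ℝ) < v := by exact_mod_cast (by omega : 0 < v)
    have : ((v + 1 : ℕ) : ℝ)⁻¹ ≤ Real.log ((v + 1 : ℕ) : ℝ) - Real.log v := by
      push_cast
      rw [← Real.log_div (by positivity) (by positivity)]
      have := Real.one_sub_inv_le_log_of_pos (x := ((v:ℝ)+1)/v) (by positivity)
      refine le_trans (le_of_eq ?_) this
      field_simp; ring
    linarith

lemma harm_set (I : Finset ℕ) (a b : ℝ) (ha : 0 < a) (hab : a ≤ b)
    (hI : ∀ m ∈ I, 1 ≤ m ∧ a ≤ (m:ℝ) ∧ (m:ℝ) < b) :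
    ∑ m ∈ I, (m:ℝ)⁻¹ ≤ 1 + Real.log (b / a) := by
  rcases I.eq_empty_or_nonempty with rfl | hne
  · have : 0 ≤ Real.log (b / a) := Real.log_nonneg ((one_le_div ha).2 hab)
    simp; linarith
  set u := I.min' hne
  set v := I.max' hne
  have hu := hI u (I.min'_mem hne)
  have hv := hI v (I.max'_mem hne)
  have huv : u ≤ v := I.min'_le _ (I.max'_mem hne)
  calc ∑ m ∈ I, (m:ℝ)⁻¹ ≤ ∑ m ∈ Finset.Icc u v, (m:ℝ)⁻¹ :=
        Finset.sum_le_sum_of_subset_of_nonneg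
          (fun m hm => Finset.mem_Icc.2 ⟨I.min'_le _ hm, I.le_max' _ hm⟩) (fun _ _ _ => by positivity)
    _ ≤ 1 + Real.log v - Real.log u := harm_Icc u v hu.1 huv
    _ ≤ 1 + Real.log b - Real.log a := by
        have h1 : Real.log v ≤ Real.log b := Real.log_le_log
          (by exact_mod_cast hv.1) hv.2.2.le
        have h2 : Real.log a ≤ Real.log u := Real.log_le_log ha hu.2.1
        linarith
    _ = _ := by rw [Real.log_div (by linarith) ha.ne']; ring

lemma ss_sum (I : Finset ℕ) (a b : ℝ) (ha : 0 < a) (hab : a ≤ b)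
    (hI : ∀ m ∈ I, 1 ≤ m ∧ a ≤ (m:ℝ) ∧ (m:ℝ) < b) :
    ∑ m ∈ I, ss m / m ≤ 2 * (1 + Real.log (b / a)) := by
  have hlog : 0 ≤ Real.log (b / a) := Real.log_nonneg ((one_le_div ha).2 hab)
  calc ∑ m ∈ I, ss m / m ≤ ∑ m ∈ I, ∑ d ∈ m.divisors, (d:ℝ)⁻¹ * (m:ℝ)⁻¹ := by
        refine Finset.sum_le_sum fun m hm => ?_
        rw [div_eq_mul_inv, ← Finset.sum_mul]
        gcongr
        rw [ss_eq m (by have := (hI m hm).1; omega)]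
        exact Finset.sum_le_sum_of_subset_of_nonneg (Finset.filter_subset _ _)
          (fun _ _ _ => by positivity)
    _ = ∑ d ∈ Finset.Icc 1 ⌊b⌋₊, ∑ m ∈ I.filter (fun m => d ∣ m), (d:ℝ)⁻¹ * (m:ℝ)⁻¹ := by
        refine Finset.sum_comm' fun m d => ?_
        simp only [Nat.mem_divisors, Finset.mem_filter, Finset.mem_Icc]
        constructor
        · rintro ⟨h1, h2, h3⟩
          have hd : d ≤ m := Nat.le_of_dvd (by omega) h2
          have hm : m ≤ ⌊b⌋₊ := Nat.le_floor (hI m h1).2.2.le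
          exact ⟨⟨h1, h2⟩, Nat.pos_of_dvd_of_pos h2 (by omega), by omega⟩
        · rintro ⟨⟨h1, h2⟩, h3, h4⟩
          exact ⟨h1, h2, by have := (hI m h1).1; omega⟩
    _ ≤ ∑ d ∈ Finset.Icc 1 ⌊b⌋₊, ((d:ℝ)^2)⁻¹ * (1 + Real.log (b / a)) := by
        refine Finset.sum_le_sum fun d hd => ?_
        have hd1 : 1 ≤ d := (Finset.mem_Icc.1 hd).1
        have hd0 : (0:ℝ) < d := by exact_mod_cast hd1
        have inj : Set.InjOn (fun m => m / d) (I.filter (fun m => d ∣ m) : Set ℕ) := by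
          intro m hm n hn h
          simp only [Finset.coe_filter, Set.mem_ofPred_eq] at hm hn
          simp only at h
          rw [← Nat.mul_div_cancel' hm.2, ← Nat.mul_div_cancel' hn.2, h]
        have key := harm_set ((I.filter (fun m => d ∣ m)).image (fun m => m / d)) (a / d) (b / d)
          (by positivity) (by gcongr) ?_
        · rw [Finset.sum_image inj] at key
          have e : b / d / (a / d) = b / a := by field_simp
          rw [e] at key
          calc _ = ((d:ℝ)^2)⁻¹ * ∑ m ∈ I.filter (fun m => d ∣ m), ((m / d : ℕ):ℝ)⁻¹ := by
                rw [Finset.mul_sum]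
                refine Finset.sum_congr rfl fun m hm => ?_
                rw [Nat.cast_div (Finset.mem_filter.1 hm).2 hd0.ne']
                rw [inv_div]; field_simp
            _ ≤ _ := by gcongr
        · intro j hj
          obtain ⟨m, hm, rfl⟩ := Finset.mem_image.1 hj
          obtain ⟨h1, h2⟩ := Finset.mem_filter.1 hm
          obtain ⟨h3, h4, h5⟩ := hI m h1
          rw [Nat.cast_div h2 hd0.ne']
          exact ⟨Nat.div_pos (Nat.le_of_dvd (by omega) h2) (by omega), by gcongr, by gcongr⟩
    _ = (∑ d ∈ Finset.Icc 1 ⌊b⌋₊, ((d:ℝ)^2)⁻¹) * (1 + Real.log (b / a)) := by rw [Finset.sum_mul]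
    _ ≤ 2 * (1 + Real.log (b / a)) := by gcongr; exact sum_inv_sq_le _

lemma R_bound (CU ε x : ℝ) (M m K K' : ℕ) (hm : 1 ≤ m) (hM : 1 ≤ M) (hK : 1 ≤ K)
    (hK' : 1 ≤ K') (hKy : (K':ℝ) ≤ yy ε x) (hKz : ((K * K' : ℕ):ℝ) ≤ zz x) (hU : 0 ≤ UU CU M ε x) :
    ((RmM CU ε x M m).card : ℝ) ≤
      12 * (UU CU M ε x * ss M) / (Real.log (K+1) * Real.log (K'+1)) * (ss m / m)
        + (1 + 2 * ((K * K' : ℕ):ℝ) ^ 6) := by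
  set k := 2 * m * M with hk
  have hk0 : k ≠ 0 := by positivity
  set bad : ℕ → ℕ → Prop := fun p n => p ∣ n ∨ (p ≤ K' ∧ ¬ p ∣ k ∧ m * n ≡ 1 [MOD p]) with hbad
  set w : ℕ → ℕ := fun p => ((Finset.range p).filter (bad p)).card with hw
  have hper : ∀ p n, bad p (n + p) ↔ bad p n := by
    intro p n
    have : m * (n + p) ≡ 1 [MOD p] ↔ m * n ≡ 1 [MOD p] := by
      have : m * (n + p) ≡ m * n [MOD p] := by simp [Nat.ModEq, mul_add]
      exact ⟨fun h => this.symm.trans h, fun h => this.trans h⟩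
    simp only [hbad, this, Nat.dvd_add_self_right]
  have hw1 : ∀ p, p.Prime → 1 ≤ w p := by
    intro p hp
    refine Finset.card_pos.2 ⟨0, ?_⟩
    simp [hbad, hp.pos]
  have hwp : ∀ p, p.Prime → w p < p := by
    intro p hp
    have : ∃ n, n < p ∧ ¬ bad p n := by
      by_cases h : bad p 1
      · refine ⟨2, ?_⟩
        simp only [hbad] at h
        rcases h with h | ⟨h1, h2, h3⟩
        · exact absurd (Nat.dvd_one.1 h) hp.ne_one
        · rw [mul_one] at h3
          have hp2 : ¬ p ∣ 2 := fun h => h2 (by rw [hk, mul_assoc]; exact h.mul_right _)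
          have : 2 < p := by
            rcases hp.two_le.eq_or_lt with e | e
            · exact absurd (e ▸ dvd_refl _) hp2
            · exact e
          refine ⟨this, ?_⟩
          simp only [hbad, not_or]
          refine ⟨hp2, fun ⟨_, _, h4⟩ => ?_⟩
          have h5 : m * 2 ≡ 1 * 2 [MOD p] := h3.mul_right 2
          have h6 : 1 ≡ 2 [MOD p] := h4.symm.trans h5
          have := (Nat.modEq_iff_dvd' (by norm_num)).1 h6
          exact hp.ne_one (Nat.dvd_one.1 (by simpa using this))
      · exact ⟨1, hp.one_lt, h⟩
    obtain ⟨n, hn, hnb⟩ := this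
    have : w p < (Finset.range p).card := by
      refine Finset.card_lt_card (Finset.filter_ssubset.2 ⟨n, Finset.mem_range.2 hn, hnb⟩)
    simpa using this
  have hw2 : ∀ p, p.Prime → p ≤ K' → ¬ p ∣ k → 2 ≤ w p := by
    intro p hp h1 h2
    have hpm : ¬ p ∣ m := fun h => h2 (by rw [hk]; exact (h.mul_left 2).mul_right M)
    obtain ⟨n, hn⟩ := Nat.exists_mul_mod_eq_one_of_coprime
      ((Nat.Prime.coprime_iff_not_dvd hp).2 hpm).symm hp.one_lt
    have hn0 : n % p ≠ 0 := by
      intro h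
      have : p ∣ m * n := (Nat.dvd_of_mod_eq_zero h).mul_left m
      rw [Nat.mod_eq_zero_of_dvd this] at hn
      omega
    have : ({0, n % p} : Finset ℕ).card = 2 := Finset.card_pair hn0.symm
    rw [← this]
    refine Finset.card_le_card fun i hi => ?_
    simp only [Finset.mem_insert, Finset.mem_singleton] at hi
    rcases hi with rfl | rfl
    · simp [hbad, hp.pos]
    · simp only [Finset.mem_filter, Finset.mem_range]
      refine ⟨Nat.mod_lt _ hp.pos, Or.inr ⟨h1, h2, ?_⟩⟩
      have : m * (n % p) ≡ m * n [MOD p] := (Nat.mod_modEq n p).mul_left m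
      refine this.trans ?_
      rw [Nat.ModEq, hn.2, Nat.mod_eq_of_lt hp.one_lt]
  set N := ⌊UU CU M ε x / (m : ℝ)⌋₊ + 1 with hN
  set Q := K * K' with hQ
  have hsel := selberg_bound Q N bad hper w (fun p _ => by simp only [hw]; congr) hwp (RmM CU ε x M m) (by
    intro n hn
    simp only [RmM, Finset.mem_filter, Finset.mem_range] at hn
    obtain ⟨hnN, hnp, hnz, hng⟩ := hn
    refine ⟨hnN, fun p hp hpQ hb => ?_⟩
    rcases hb with h | ⟨h1, h2, h3⟩
    · have e : p = n := (Nat.prime_dvd_prime_iff_eq hp hnp).1 h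
      have : (n:ℝ) ≤ (Q:ℝ) := by rw [← e]; exact_mod_cast hpQ
      linarith
    · have hmn : 1 ≤ m * n := Nat.mul_pos hm hnp.pos
      have hd : p ∣ m * n - 1 := (Nat.modEq_iff_dvd' hmn).1 h3.symm
      have hdP : p ∣ PM M (yy ε x) := by
        unfold PM
        refine Finset.dvd_prod_of_mem (fun p : ℕ => p) ?_
        simp only [Finset.mem_filter, Finset.mem_range]
        refine ⟨?_, hp, fun h => h2 (by rw [hk]; exact h.mul_left _)⟩
        have : K' ≤ ⌊yy ε x⌋₊ := Nat.le_floor hKy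
        omega
      exact Nat.not_coprime_of_dvd_of_dvd hp.one_lt hd hdP hng)
  have hL := LL_lower w hw1 hwp K K' k hk0 hw2
  rw [← hQ] at hL
  have hKr : (1:ℝ) ≤ K := by exact_mod_cast hK
  have hKr' : (1:ℝ) ≤ K' := by exact_mod_cast hK'
  have hm0 : (0:ℝ) < m := by exact_mod_cast hm
  have l1 : 0 < Real.log ((K:ℝ) + 1) := Real.log_pos (by linarith)
  have l2 : 0 < Real.log ((K':ℝ) + 1) := Real.log_pos (by linarith)
  have hL1 : 1 ≤ LL w Q := by
    unfold LL
    have h1 : (1:ℕ) ∈ (Finset.Icc 1 Q).filter Squarefree := by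
      simp [hQ]; exact Nat.mul_pos hK hK'
    have := Finset.single_le_sum (f := fun l : ℕ => ∏ p ∈ l.primeFactors, ((w p : ℝ) / (p - w p)))
      (fun l _ => Finset.prod_nonneg fun p hp => by
        have : (w p : ℝ) < p := by exact_mod_cast hwp p (Nat.prime_of_mem_primeFactors hp)
        exact div_nonneg (by positivity) (by linarith)) h1
    simpa using this
  set L := LL w Q
  have hL0 : 0 < L := by linarith
  have hNle : (N:ℝ) ≤ UU CU M ε x / m + 1 := by
    rw [hN]; push_cast
    have := Nat.floor_le (show 0 ≤ UU CU M ε x / (m:ℝ) by positivity)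
    linarith
  have hssk : ss k ≤ 3 / 2 * ss m * ss M := by
    rw [hk]
    have e1 := ss_mul_le (2 * m) M (by omega) (by omega)
    have e2 := ss_mul_le 2 m (by omega) (by omega)
    have := ss_two
    have := (ss_pos m).le
    have := (ss_pos M).le
    calc _ ≤ ss (2 * m) * ss M := e1
      _ ≤ (ss 2 * ss m) * ss M := by gcongr
      _ ≤ _ := by gcongr
  have hinv : 1 / L ≤ 12 * ss m * ss M / (Real.log (K+1) * Real.log (K'+1)) := by
    rw [div_le_div_iff₀ hL0 (by positivity)]
    calc _ ≤ 8 * ss k * L := by linarith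
      _ ≤ 8 * (3 / 2 * ss m * ss M) * L := by gcongr
      _ = _ := by ring
  have hE : (0:ℝ) ≤ 2 * (Q:ℝ)^6 := by positivity
  calc ((RmM CU ε x M m).card : ℝ) ≤ (N * L + 2 * (Q:ℝ)^6) / L ^ 2 := by
        rw [le_div_iff₀ (by positivity)]; exact hsel
    _ = N * (1 / L) + 2 * (Q:ℝ)^6 / L^2 := by field_simp
    _ ≤ (UU CU M ε x / m + 1) * (1 / L) + 2 * (Q:ℝ)^6 := by
        gcongr
        exact div_le_self hE (one_le_pow₀ hL1)
    _ = UU CU M ε x / m * (1 / L) + (1 / L + 2 * (Q:ℝ)^6) := by ring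
    _ ≤ UU CU M ε x / m * (12 * ss m * ss M / (Real.log (K+1) * Real.log (K'+1)))
        + (1 + 2 * (Q:ℝ)^6) := by
        gcongr
        rw [div_le_one hL0]; exact hL1
    _ = _ := by ring

lemma total_bound (CU ε x : ℝ) (hCU : 0 < CU) (hε0 : 0 < ε) (hε1 : ε < 1) (M : ℕ) (hM : 1 ≤ M)
    (hx : 1 ≤ x) (h1 : 0 < Real.log x) (h2 : 0 < Real.log (Real.log x))
    (h3 : 0 < Real.log (Real.log (Real.log x)))
    (h32 : Real.log (Real.log (Real.log x)) ≤ Real.log (Real.log x))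
    (hy : yy ε x ≤ x ^ ((1:ℝ)/40)) (hz : x ^ ((1:ℝ)/20) ≤ zz x) (I : Finset ℕ) (a b : ℝ)
    (ha : 0 < a) (hab : a ≤ b)
    (hI : ∀ m ∈ I, 1 ≤ m ∧ a ≤ (m:ℝ) ∧ (m:ℝ) < b ∧ (m:ℝ) ≤ UU CU M ε x / zz x) :
    ∑ m ∈ I, ((RmM CU ε x M m).card : ℝ) ≤
      CU * (x / Real.log x * (960 * (1 + Real.log (b / a)) / Real.log (Real.log x))
        + Real.log x * (1 + 2 * x ^ ((3:ℝ)/10))) := by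
  have hx0 : 0 < x := by linarith
  have hM0 : (0:ℝ) < M := by exact_mod_cast hM
  have hlogy : Real.log (yy ε x) = (1 - ε) * Real.log x * Real.log (Real.log (Real.log x))
      / Real.log (Real.log x) := by
    unfold yy; rw [Real.log_exp]; rfl
  have hUdef : UU CU M ε x = CU * ((M.totient : ℝ) / (M : ℝ)) * x * Real.log (yy ε x)
      / Real.log (Real.log x) := rfl
  have hzdef : zz x = x / Real.log (Real.log x) := rfl
  have e1 : 0 < 1 - ε := by linarith
  have hly0 : 0 < Real.log (yy ε x) := by rw [hlogy]; positivity
  have hly1 : Real.log (yy ε x) ≤ Real.log x := by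
    rw [hlogy, div_le_iff₀ h2]
    calc _ ≤ 1 * Real.log x * Real.log (Real.log x) := by gcongr; linarith
      _ = _ := by ring
  have hU0 : 0 ≤ UU CU M ε x := by rw [hUdef]; positivity
  have hz0 : 0 < zz x := by rw [hzdef]; positivity
  have hUz : UU CU M ε x / zz x ≤ CU * Real.log x := by
    have : UU CU M ε x / zz x = CU * ((M.totient : ℝ) / (M : ℝ)) * Real.log (yy ε x) := by
      rw [hUdef, hzdef]; field_simp
    rw [this]
    have : (M.totient : ℝ) / (M : ℝ) ≤ 1 := by
      rw [div_le_one hM0]; exact_mod_cast Nat.totient_le M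
    calc _ ≤ CU * 1 * Real.log x := by gcongr
      _ = _ := by ring
  have hUs : UU CU M ε x * ss M ≤ CU * x * Real.log (yy ε x) / Real.log (Real.log x) := by
    have := ss_totient M
    calc UU CU M ε x * ss M = CU * x * Real.log (yy ε x) / Real.log (Real.log x) *
          (ss M * ((M.totient : ℝ) / (M : ℝ))) := by rw [hUdef]; ring
      _ ≤ CU * x * Real.log (yy ε x) / Real.log (Real.log x) * 1 := by gcongr
      _ = _ := by ring
  have hy1 : 1 ≤ yy ε x := by
    have : 0 < yy ε x := Real.exp_pos _
    rw [← Real.exp_log this]; exact Real.one_le_exp hly0.le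
  set K := ⌊x ^ ((1:ℝ)/40)⌋₊ with hK
  set K' := ⌊yy ε x⌋₊ with hK'
  have K1 : 1 ≤ K := Nat.le_floor (by simpa using Real.one_le_rpow hx (by norm_num))
  have K1' : 1 ≤ K' := Nat.le_floor (by simpa using hy1)
  have Kle : (K:ℝ) ≤ x ^ ((1:ℝ)/40) := Nat.floor_le (by positivity)
  have Kle' : (K':ℝ) ≤ yy ε x := Nat.floor_le (by linarith)
  have hQ : ((K * K' : ℕ) : ℝ) ≤ x ^ ((1:ℝ)/20) := by
    push_cast
    calc (K:ℝ) * K' ≤ x ^ ((1:ℝ)/40) * x ^ ((1:ℝ)/40) := by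
          gcongr; exact Kle'.trans hy
      _ = _ := by rw [← Real.rpow_add hx0]; norm_num
  have hQ6 : ((K * K' : ℕ) : ℝ) ^ 6 ≤ x ^ ((3:ℝ)/10) := by
    calc _ ≤ (x ^ ((1:ℝ)/20)) ^ 6 := by gcongr
      _ = _ := by rw [← Real.rpow_natCast, ← Real.rpow_mul hx0.le]; norm_num
  have lK : Real.log x / 40 ≤ Real.log ((K:ℝ) + 1) := by
    have : Real.log x / 40 = Real.log (x ^ ((1:ℝ)/40)) := by
      rw [Real.log_rpow hx0]; ring
    rw [this]
    exact Real.log_le_log (by positivity) (Nat.lt_floor_add_one _).le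
  have lK' : Real.log (yy ε x) ≤ Real.log ((K':ℝ) + 1) :=
    Real.log_le_log (by linarith) (Nat.lt_floor_add_one _).le
  have hcard : (I.card : ℝ) ≤ CU * Real.log x := by
    refine le_trans ?_ hUz
    have : I.card ≤ ⌊UU CU M ε x / zz x⌋₊ := by
      calc I.card ≤ (Finset.Icc 1 ⌊UU CU M ε x / zz x⌋₊).card := 
            Finset.card_le_card fun m hm => Finset.mem_Icc.2 ⟨(hI m hm).1, Nat.le_floor (hI m hm).2.2.2⟩
        _ = _ := by simp
    exact le_trans (by exact_mod_cast this) (Nat.floor_le (by positivity))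
  have hss := ss_sum I a b ha hab (fun m hm => ⟨(hI m hm).1, (hI m hm).2.1, (hI m hm).2.2.1⟩)
  have hlog : 0 ≤ Real.log (b / a) := Real.log_nonneg ((one_le_div ha).2 hab)
  have hss0 : 0 ≤ ∑ m ∈ I, ss m / m := Finset.sum_nonneg fun m _ => by
    have := (ss_pos m).le
    positivity
  have hsM := (ss_pos M).le
  calc ∑ m ∈ I, ((RmM CU ε x M m).card : ℝ) ≤ 
      ∑ m ∈ I, (12 * (UU CU M ε x * ss M) / (Real.log (K+1) * Real.log (K'+1)) * (ss m / m)
        + (1 + 2 * ((K * K' : ℕ):ℝ) ^ 6)) := Finset.sum_le_sum fun m hm =>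
          R_bound CU ε x M m K K' (hI m hm).1 hM K1 K1' Kle' (hQ.trans hz) hU0
    _ = 12 * (UU CU M ε x * ss M) / (Real.log (K+1) * Real.log (K'+1)) * ∑ m ∈ I, ss m / m
        + I.card * (1 + 2 * ((K * K' : ℕ):ℝ) ^ 6) := by
        rw [Finset.sum_add_distrib, ← Finset.mul_sum, Finset.sum_const, nsmul_eq_mul]
    _ ≤ 12 * (CU * x * Real.log (yy ε x) / Real.log (Real.log x)) /
          (Real.log x / 40 * Real.log (yy ε x)) * (2 * (1 + Real.log (b / a)))
        + (CU * Real.log x) * (1 + 2 * x ^ ((3:ℝ)/10)) := by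
        gcongr
        exact le_trans (by positivity) lK
    _ = _ := by field_simp; ring

lemma ev_facts (c : ℝ) (hc : 0 < c) : ∃ x₀ : ℝ, ∀ x : ℝ, x ≥ x₀ →
    1 ≤ x ∧ 1 ≤ Real.log x ∧ 1 ≤ c * Real.log x ∧
    1 ≤ Real.log (Real.log x) ∧ 0 < Real.log (Real.log (Real.log x)) ∧
    Real.log (Real.log (Real.log x)) ≤ Real.log (Real.log x) / 40 ∧
    1 ≤ c * Real.log (Real.log x) ∧
    Real.log (Real.log (Real.log x)) ≤ c * Real.log (Real.log x) ∧
    x ^ ((1:ℝ)/20) ≤ x / Real.log (Real.log x) ∧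
    Real.log x * (1 + 2 * x ^ ((3:ℝ)/10)) ≤ c * (x / Real.log x) := by
  rw [← Filter.eventually_atTop]
  have T1 := Real.tendsto_log_atTop
  have T2 := T1.comp T1
  have T3 := T1.comp T2
  have o1 : ∀ d : ℝ, 0 < d → ∀ᶠ t in Filter.atTop, Real.log t ≤ d * t := by
    intro d hd
    filter_upwards [Real.isLittleO_log_id_atTop.bound hd, Filter.eventually_ge_atTop 0] with t ht h0
    simp only [id, Real.norm_eq_abs, abs_of_nonneg h0] at ht
    exact (le_abs_self _).trans ht
  have o2 : ∀ᶠ x : ℝ in Filter.atTop, Real.log x ≤ x ^ ((1:ℝ)/10) := by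
    filter_upwards [(isLittleO_log_rpow_atTop (show (0:ℝ) < 1/10 by norm_num)).bound one_pos,
      Filter.eventually_ge_atTop 0] with t ht h0
    rw [one_mul, Real.norm_eq_abs, Real.norm_eq_abs, abs_of_nonneg (Real.rpow_nonneg h0 _)] at ht
    exact (le_abs_self _).trans ht
  filter_upwards [Filter.eventually_ge_atTop 1, T1.eventually_ge_atTop 1,
    T1.eventually_ge_atTop (1 / c), T2.eventually_ge_atTop 1, T2.eventually_ge_atTop (1 / c),
    T3.eventually_gt_atTop 0, T2.eventually (o1 (1/40) (by norm_num)), T2.eventually (o1 c hc), o2,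
    (tendsto_rpow_atTop (show (0:ℝ) < 1/2 by norm_num)).eventually_ge_atTop (3 / c)]
    with x a1 a2 a3 a4 a5 a6 a7 a8 a9 a10
  simp only [Function.comp] at a4 a5 a6 a7 a8
  have x0 : 0 < x := by linarith
  have hl2 : Real.log (Real.log x) ≤ Real.log x := by
    have := Real.log_le_sub_one_of_pos (show 0 < Real.log x by linarith)
    linarith
  refine ⟨a1, a2, ?_, a4, a6, by linarith, ?_, a8, ?_, ?_⟩
  · rw [div_le_iff₀ hc] at a3; linarith
  · rw [div_le_iff₀ hc] at a5; linarith
  · rw [le_div_iff₀ (by linarith)]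
    calc _ ≤ x ^ ((1:ℝ)/20) * x ^ ((1:ℝ)/10) := by gcongr; linarith
      _ = x ^ ((3:ℝ)/20) := by rw [← Real.rpow_add x0]; norm_num
      _ ≤ x ^ (1:ℝ) := Real.rpow_le_rpow_of_exponent_le a1 (by norm_num)
      _ = x := Real.rpow_one x
  · rw [← mul_div_assoc, le_div_iff₀ (by linarith)]
    have h1 : 1 ≤ x ^ ((3:ℝ)/10) := Real.one_le_rpow a1 (by norm_num)
    have l0 : 0 ≤ Real.log x := by linarith
    rw [div_le_iff₀ hc] at a10
    calc Real.log x * (1 + 2 * x ^ ((3:ℝ)/10)) * Real.log x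
        ≤ x ^ ((1:ℝ)/10) * (3 * x ^ ((3:ℝ)/10)) * x ^ ((1:ℝ)/10) := by
          gcongr; linarith
      _ = 3 * x ^ ((1:ℝ)/2) := by
          have : x ^ ((1:ℝ)/2) = x ^ ((1:ℝ)/10) * x ^ ((3:ℝ)/10) * x ^ ((1:ℝ)/10) := by
            rw [← Real.rpow_add x0, ← Real.rpow_add x0]; norm_num
          rw [this]; ring
      _ ≤ (x ^ ((1:ℝ)/2) * c) * x ^ ((1:ℝ)/2) := by gcongr
      _ = c * (x ^ ((1:ℝ)/2) * x ^ ((1:ℝ)/2)) := by ring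
      _ = c * x := by rw [← Real.rpow_add x0]; norm_num

lemma yy_le (ε x : ℝ) (hε0 : 0 < ε) (hε1 : ε < 1) (hx : 1 ≤ x) (h1 : 1 ≤ Real.log x)
    (h2 : 1 ≤ Real.log (Real.log x)) (h3 : 0 < Real.log (Real.log (Real.log x)))
    (h4 : Real.log (Real.log (Real.log x)) ≤ Real.log (Real.log x) / 40) :
    yy ε x ≤ x ^ ((1:ℝ)/40) := by
  rw [Real.rpow_def_of_pos (by linarith)]
  show Real.exp ((1 - ε) * Real.log x * Real.log (Real.log (Real.log x)) / Real.log (Real.log x)) ≤ _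
  rw [Real.exp_le_exp, div_le_iff₀ (by linarith)]
  have : 0 ≤ 1 - ε := by linarith
  calc _ ≤ 1 * Real.log x * (Real.log (Real.log x) / 40) := by gcongr; linarith
    _ = _ := by ring

/-- (i) `∑_{U/(z(log₂x)²) ≤ m < U/z} |R_m^{(M)}| = o(C_U·x/log x)`, and
(ii) `∑_{1 ≤ m < U/(z(log₂x)²)} |R_m^{(M)}| = O(C_U·x/log x)`. -/
theorem stmt6 :
    ∀ ε : ℝ, 0 < ε → ε < 1 → ∀ CU : ℝ, 0 < CU →
    ∃ κ A : ℝ, 0 < κ ∧ 0 < A ∧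
      (∀ η : ℝ, 0 < η → ∃ x₀ : ℝ, ∀ x : ℝ, x ≥ x₀ →
        ∀ M : ℕ, 1 ≤ M → (M : ℝ) ≤ κ * x ^ ((1 : ℝ) / 5) →
        (∑ m ∈ (Finset.range (⌊UU CU M ε x / zz x⌋₊ + 1)).filter (fun m : ℕ =>
            UU CU M ε x / (zz x * (Real.log^[2] x) ^ 2) ≤ (m : ℝ) ∧
              (m : ℝ) < UU CU M ε x / zz x),
          ((RmM CU ε x M m).card : ℝ))
          ≤ η * CU * x / Real.log x) ∧
      (∃ x₀ : ℝ, ∀ x : ℝ, x ≥ x₀ →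
        ∀ M : ℕ, 1 ≤ M → (M : ℝ) ≤ κ * x ^ ((1 : ℝ) / 5) →
        (∑ m ∈ (Finset.range (⌊UU CU M ε x / zz x⌋₊ + 1)).filter (fun m : ℕ =>
            1 ≤ m ∧ (m : ℝ) < UU CU M ε x / (zz x * (Real.log^[2] x) ^ 2)),
          ((RmM CU ε x M m).card : ℝ))
          ≤ A * CU * x / Real.log x) := by
  intro ε hε0 hε1 CU hCU
  refine ⟨1, 3000, one_pos, by norm_num, ?_, ?_⟩
  · intro η hη
    obtain ⟨x₀, hx₀⟩ := ev_facts (η / 5760) (by positivity)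
    refine ⟨x₀, fun x hx M hM _ => ?_⟩
    obtain ⟨a1, a2, a3, a4, a5, a6, a7, a8, a9, a10⟩ := hx₀ x hx
    have x0 : 0 < x := by linarith
    have hM0 : (0:ℝ) < M := by exact_mod_cast hM
    have hφ : (0:ℝ) < M.totient := by exact_mod_cast Nat.totient_pos.2 hM
    have hy := yy_le ε x hε0 hε1 a1 a2 a4 a5 a6
    have hU0 : 0 < UU CU M ε x := by
      have e1 : 0 < 1 - ε := by linarith
      show 0 < CU * ((M.totient : ℝ) / (M : ℝ)) * x * Real.log (Real.exp ((1 - ε) * Real.log x *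
        Real.log (Real.log (Real.log x)) / Real.log (Real.log x))) / Real.log (Real.log x)
      rw [Real.log_exp]
      positivity
    have hz0 : 0 < zz x := by
      show 0 < x / Real.log (Real.log x)
      positivity
    have hl2 : Real.log^[2] x = Real.log (Real.log x) := rfl
    rw [hl2]
    set l2 := Real.log (Real.log x) with hl2d
    have l20 : 0 < l2 := by linarith
    set a := UU CU M ε x / (zz x * l2 ^ 2) with ha
    set b := UU CU M ε x / zz x with hb
    have ha0 : 0 < a := by positivity
    have hba : b / a = l2 ^ 2 := by rw [ha, hb]; field_simp
    have hab : a ≤ b := by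
      rw [← one_le_div ha0, hba]
      exact one_le_pow₀ a4
    have key := total_bound CU ε x hCU hε0 hε1 M hM a1 (by linarith) (by linarith) a5 (by linarith)
      hy a9 ((Finset.range (⌊b⌋₊ + 1)).filter (fun m : ℕ => a ≤ (m : ℝ) ∧ (m : ℝ) < b)) a b ha0 hab (by
        intro m hm
        obtain ⟨_, h1, h2⟩ := Finset.mem_filter.1 hm
        refine ⟨?_, h1, h2, h2.le⟩
        have : (0:ℝ) < m := by linarith
        exact_mod_cast this)
    rw [← hl2d, hba, Real.log_pow] at key
    have hfin : 960 * (1 + ((2:ℕ):ℝ) * Real.log l2) / l2 ≤ η / 2 := by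
      rw [div_le_iff₀ l20]; push_cast
      linarith
    have hxl : 0 ≤ x / Real.log x := by positivity
    have step : CU * (x / Real.log x * (960 * (1 + ((2:ℕ):ℝ) * Real.log l2) / l2)
        + Real.log x * (1 + 2 * x ^ ((3:ℝ)/10))) ≤ η * CU * x / Real.log x := by
      calc _ ≤ CU * (x / Real.log x * (η / 2) + η / 5760 * (x / Real.log x)) := by gcongr
        _ ≤ CU * (x / Real.log x * (η / 2) + η / 2 * (x / Real.log x)) := by
          gcongr; norm_num
        _ = _ := by ring
    refine le_trans (le_of_eq ?_) (key.trans step)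
    congr
  · obtain ⟨x₀, hx₀⟩ := ev_facts (min 1 (1 / CU)) (by positivity)
    refine ⟨x₀, fun x hx M hM _ => ?_⟩
    obtain ⟨a1, a2, a3, a4, a5, a6, a7, a8, a9, a10⟩ := hx₀ x hx
    have x0 : 0 < x := by linarith
    have hM0 : (0:ℝ) < M := by exact_mod_cast hM
    have hφ : (0:ℝ) < M.totient := by exact_mod_cast Nat.totient_pos.2 hM
    have hφ1 : (M.totient : ℝ) / (M : ℝ) ≤ 1 := by
      rw [div_le_one hM0]; exact_mod_cast Nat.totient_le M
    have hy := yy_le ε x hε0 hε1 a1 a2 a4 a5 a6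
    have hl2 : Real.log^[2] x = Real.log (Real.log x) := rfl
    have hz0 : 0 < zz x := by
      show 0 < x / Real.log (Real.log x)
      positivity
    have hlogy : Real.log (yy ε x) ≤ Real.log x := by
      refine Real.log_le_log (Real.exp_pos _) (hy.trans ?_)
      calc _ ≤ x ^ (1:ℝ) := Real.rpow_le_rpow_of_exponent_le a1 (by norm_num)
        _ = x := Real.rpow_one x
    have e1 : 0 < 1 - ε := by linarith
    have hly0 : 0 < Real.log (yy ε x) := by
      unfold yy; rw [Real.log_exp]
      show 0 < (1 - ε) * Real.log x *
        Real.log (Real.log (Real.log x)) / Real.log (Real.log x)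
      positivity
    have hU0 : 0 < UU CU M ε x := by
      show 0 < CU * ((M.totient : ℝ) / (M : ℝ)) * x * Real.log (yy ε x) / Real.log (Real.log x)
      positivity
    have hUz : UU CU M ε x / zz x ≤ CU * Real.log x := by
      have : UU CU M ε x / zz x = CU * ((M.totient : ℝ) / (M : ℝ)) * Real.log (yy ε x) := by
        show (CU * ((M.totient : ℝ) / (M : ℝ)) * x * Real.log (yy ε x) / Real.log (Real.log x)) /
          (x / Real.log (Real.log x)) = _
        field_simp
      rw [this]
      calc _ ≤ CU * 1 * Real.log x := by gcongr
        _ = _ := by ring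
    rw [hl2]
    set l2 := Real.log (Real.log x) with hl2d
    have l20 : 0 < l2 := by linarith
    have hCl : CU ≤ Real.log x := by
      have : 1 ≤ 1 / CU * Real.log x := a3.trans (by gcongr; exact min_le_right _ _)
      rw [one_div, ← div_eq_inv_mul, le_div_iff₀ hCU] at this
      linarith
    have hsm : UU CU M ε x / (zz x * l2 ^ 2) ≤ UU CU M ε x / zz x := by
      apply div_le_div_of_nonneg_left hU0.le hz0
      exact le_mul_of_one_le_right hz0.le (one_le_pow₀ a4)
    have key := total_bound CU ε x hCU hε0 hε1 M hM a1 (by linarith) (by linarith) a5 (by linarith)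
      hy a9 ((Finset.range (⌊UU CU M ε x / zz x⌋₊ + 1)).filter (fun m : ℕ =>
            1 ≤ m ∧ (m : ℝ) < UU CU M ε x / (zz x * l2 ^ 2))) 1 (Real.log x ^ 2) one_pos
        (one_le_pow₀ a2) (by
        intro m hm
        obtain ⟨_, h1, h2⟩ := Finset.mem_filter.1 hm
        refine ⟨h1, by exact_mod_cast h1, ?_, (h2.trans_le hsm).le⟩
        calc (m:ℝ) < CU * Real.log x := h2.trans_le (hsm.trans hUz)
          _ ≤ Real.log x * Real.log x := by gcongr
          _ = _ := by ring)
    rw [← hl2d, div_one, Real.log_pow, ← hl2d] at key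
    have hfin : 960 * (1 + ((2:ℕ):ℝ) * l2) / l2 ≤ 2880 := by
      rw [div_le_iff₀ l20]; push_cast
      linarith
    have hxl : 0 ≤ x / Real.log x := by positivity
    have step : CU * (x / Real.log x * (960 * (1 + ((2:ℕ):ℝ) * l2) / l2)
        + Real.log x * (1 + 2 * x ^ ((3:ℝ)/10))) ≤ 3000 * CU * x / Real.log x := by
      calc _ ≤ CU * (x / Real.log x * 2880 + min 1 (1 / CU) * (x / Real.log x)) := by gcongr
        _ ≤ CU * (x / Real.log x * 2880 + 120 * (x / Real.log x)) := by
          gcongr; exact (min_le_left _ _).trans (by norm_num)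
        _ = _ := by ring
    refine le_trans (le_of_eq ?_) (key.trans step)
    congr
end
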